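/- arXiv:1603.04320 — 4 statements merged into one kernel-verified Lean document; each statement's English description precedes it below -/
import Mathlib

section
/- Let F be a homogeneous cubic polynomial in 5 variables X₀, …, X₄ over ℂ such that for every v ∈ ℂ⁵ the quadric ∂_v F = Σᵢ vᵢ ∂F/∂Xᵢ is a degenerate quadratic form, and such that F is not a cone. Then F is singular along a plane: there exists a 3-dimensional linear subspace W ⊆ ℂ⁵ such that every first partial derivative ∂F/∂Xᵢ vanishes at every point of W. -/
open MvPolynomial

/-!
Let `T` be the symmetric trilinear form polarising `F`, so that `T a` is a multiple of the Hessian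
of `F` at `a`. Its determinant vanishes identically, so there is a nonzero polynomial vector field
`p` with `T a (p a) = 0` for all `a`. Differentiating this identity once gives
`T b (p a) = -T a (∂_b p a)`, and differentiating it twice shows that the vectors `∂_b p a` span a
`T a`-isotropic subspace. If `F a ≠ 0`, counting dimensions gives `2 * rank (T (p a)) + 2 ≤ 5`.
So for general `a` the polar quadric of `k = p a` is a double hyperplane `g ^ 2 = 0`, and this
hyperplane contains both `a` and `k`. Two such points `k`, `k'` satisfy `T k k' = 0` as soon as
`g a' ≠ 0`, and three general ones span the required plane.
-/

namespace VanishingHessian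

open Module

section LinearAlgebra

variable {K V W : Type*} [Field K] [AddCommGroup V] [Module K V] [FiniteDimensional K V]
  [AddCommGroup W] [Module K W]

lemma two_mul_finrank_range_add_two_le_of_range_le_map_ker {S T : V →ₗ[K] W} {a k : V}
    (hST : LinearMap.range S ≤ (LinearMap.ker S).map T) (ha : S a = 0)
    (hTa : T a ∉ LinearMap.range S) (hk : k ≠ 0) (hSk : S k = 0) (hTk : T k = 0) :
    2 * finrank K (LinearMap.range S) + 2 ≤ finrank K V := by
  let T' := T.domRestrict (LinearMap.ker S)
  have range_lt : LinearMap.range S < LinearMap.range T' := by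
    rw [LinearMap.range_domRestrict]
    exact lt_of_le_of_ne hST fun h => hTa (h ▸ Submodule.mem_map_of_mem ha)
  have ker_ne_bot : LinearMap.ker T' ≠ ⊥ :=
    (Submodule.ne_bot_iff _).mpr ⟨⟨k, hSk⟩, hTk, fun h => hk (congrArg Subtype.val h)⟩
  have range_finrank_lt := Submodule.finrank_lt_finrank_of_lt range_lt
  have ker_finrank_pos := Submodule.one_le_finrank_iff.mpr ker_ne_bot
  have rank_nullity := S.finrank_range_add_finrank_ker
  have rank_nullity' := T'.finrank_range_add_finrank_ker
  omega

lemma exists_forall_eq_smul_of_finrank_range_le_one {S : V →ₗ[K] W}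
    (hrank : finrank K (LinearMap.range S) ≤ 1) : ∃ w, ∀ y, ∃ t : K, S y = t • w := by
  obtain ⟨⟨w, _⟩, hw⟩ := finrank_le_one_iff.mp hrank
  refine ⟨w, fun y => ?_⟩
  obtain ⟨t, ht⟩ := hw ⟨S y, y, rfl⟩
  exact ⟨t, (congrArg Subtype.val ht).symm⟩

lemma exists_eq_mul_mul_of_finrank_range_le_one {B : LinearMap.BilinForm K V}
    (hB : ∀ y z, B y z = B z y) (hrank : finrank K (LinearMap.range B) ≤ 1) :
    ∃ (c : K) (g : Dual K V), ∀ y z, B y z = c * (g y * g z) := by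
  obtain ⟨g, hg⟩ := exists_forall_eq_smul_of_finrank_range_le_one hrank
  choose t ht using hg
  by_cases hg0 : g = 0
  · exact ⟨0, 0, fun y z => by simp [ht, hg0]⟩
  obtain ⟨x, hx⟩ : ∃ x, g x ≠ 0 := by
    by_contra! h
    exact hg0 (LinearMap.ext h)
  refine ⟨t x / g x, g, fun y z => ?_⟩
  have symm_yx := hB y x
  simp only [ht, LinearMap.smul_apply, smul_eq_mul] at symm_yx ⊢
  field_simp
  linear_combination g z * symm_yx

end LinearAlgebra

section TrilinearForm

section CommRing

variable {R V : Type*} [CommRing R] [AddCommGroup V] [Module R V]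
  {T : V →ₗ[R] LinearMap.BilinForm R V} {a k : V} {u : V → V}

/-- Symmetry of a trilinear form, expressed by two transpositions generating all permutations of
the arguments. -/
structure IsSymmTrilinear (T : V →ₗ[R] LinearMap.BilinForm R V) : Prop where
  swap_left (x y z : V) : T x y z = T y x z
  swap_right (x y z : V) : T x y z = T x z y

lemma IsSymmTrilinear.reverse (hT : IsSymmTrilinear T) (x y z : V) : T x y z = T z y x := by
  rw [hT.swap_left, hT.swap_right, hT.swap_left]

/-- The pointwise relations satisfied by the value `k` at `a` and the derivative `u` at `a` of a
polynomial vector field `p` with `T x (p x) = 0` for all `x`. -/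
structure IsKernelJet (T : V →ₗ[R] LinearMap.BilinForm R V) (a k : V) (u : V → V) : Prop where
  apply_value : T a k = 0
  apply_deriv (b : V) : T k b = -T a (u b)
  isotropic (b c : V) : T a (u b) (u c) = 0

namespace IsKernelJet

lemma apply_value_self (hT : IsSymmTrilinear T) (h : IsKernelJet T a k u) : T k k = 0 := by
  ext z
  rw [hT.swap_right, h.apply_deriv, LinearMap.neg_apply, hT.swap_right, h.apply_value]
  simp

lemma apply_value_base (hT : IsSymmTrilinear T) (h : IsKernelJet T a k u) : T k a = 0 := by
  ext z
  rw [hT.swap_left, h.apply_value]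

lemma apply_value_deriv (hT : IsSymmTrilinear T) (h : IsKernelJet T a k u) (b : V) :
    T k (u b) = 0 := by
  ext z
  rw [hT.swap_right, h.apply_deriv, LinearMap.neg_apply, h.isotropic]
  simp

end IsKernelJet

end CommRing

variable {K V : Type*} [Field K] [AddCommGroup V] [Module K V]
  {T : V →ₗ[K] LinearMap.BilinForm K V} {a a' k k' : V} {u : V → V} {g g' : Dual K V}

/-- The polar quadric of `k` is the double hyperplane `g ^ 2 = 0`, and this hyperplane contains
both `k` and `a`. -/
structure IsDoublePolar (T : V →ₗ[K] LinearMap.BilinForm K V) (a k : V) (g : Dual K V) :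
    Prop where
  exists_eq : ∃ c : K, c ≠ 0 ∧ ∀ y z, T k y z = c * (g y * g z)
  functional_ne_zero : g ≠ 0
  functional_base : g a = 0
  functional_self : g k = 0

namespace IsKernelJet

variable [FiniteDimensional K V]

lemma two_mul_finrank_range_add_two_le (hT : IsSymmTrilinear T) (h : IsKernelJet T a k u)
    (hk : k ≠ 0) (ha : T a a a ≠ 0) :
    2 * finrank K (LinearMap.range (T k)) + 2 ≤ finrank K V := by
  refine two_mul_finrank_range_add_two_le_of_range_le_map_ker (T := T a) ?_
    (h.apply_value_base hT) ?_ hk (h.apply_value_self hT) h.apply_value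
  · rintro _ ⟨b, rfl⟩
    exact ⟨-u b, by simp [h.apply_value_deriv hT], by rw [map_neg, h.apply_deriv]⟩
  · rintro ⟨b, hb⟩
    apply ha
    rw [← hb, hT.swap_right, h.apply_value_base hT, LinearMap.zero_apply]

lemma exists_isDoublePolar (hT : IsSymmTrilinear T) (hV : finrank K V ≤ 5)
    (h : IsKernelJet T a k u) (hk : T k ≠ 0) (ha : T a a a ≠ 0) :
    ∃ g, IsDoublePolar T a k g := by
  have hk0 : k ≠ 0 := fun h0 => hk (by rw [h0, map_zero])
  have rank_bound := h.two_mul_finrank_range_add_two_le hT hk0 ha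
  obtain ⟨c, g, hcg⟩ :=
    exists_eq_mul_mul_of_finrank_range_le_one (hT.swap_right k) (by omega)
  have hc : c ≠ 0 := by
    rintro rfl
    exact hk (LinearMap.ext₂ fun y z => by simp [hcg])
  refine ⟨g, ⟨c, hc, hcg⟩, ?_, ?_, ?_⟩
  · rintro rfl
    exact hk (LinearMap.ext₂ fun y z => by simp [hcg])
  · simpa [h.apply_value_base hT, hc] using hcg a a
  · simpa [h.apply_value_self hT, hc] using hcg k k

end IsKernelJet

namespace IsDoublePolar

lemma apply_eq_zero_iff (h : IsDoublePolar T a k g) (y z : V) :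
    T k y z = 0 ↔ g y = 0 ∨ g z = 0 := by
  obtain ⟨c, hc, hcg⟩ := h.exists_eq
  simp [hcg, hc]

lemma apply_self (h : IsDoublePolar T a k g) : T k k = 0 :=
  LinearMap.ext fun z => (h.apply_eq_zero_iff k z).mpr (.inl h.functional_self)

lemma point_ne_zero (h : IsDoublePolar T a k g) : k ≠ 0 := by
  rintro rfl
  refine h.functional_ne_zero (LinearMap.ext fun z => ?_)
  simpa using (h.apply_eq_zero_iff z z).mp (by simp)

-- Since `T k k' a' = T k' k a' = 0`, the double hyperplane of `k` contains `k'`.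
lemma apply_eq_zero_of_functional_ne_zero (hT : IsSymmTrilinear T) (h : IsDoublePolar T a k g)
    (h' : IsDoublePolar T a' k' g') (ha' : g a' ≠ 0) : T k k' = 0 := by
  have hk' : T k k' a' = 0 := by
    rw [hT.swap_left]
    exact (h'.apply_eq_zero_iff k a').mpr (.inr h'.functional_base)
  have functional_point : g k' = 0 := ((h.apply_eq_zero_iff k' a').mp hk').resolve_right ha'
  exact LinearMap.ext fun z => (h.apply_eq_zero_iff k' z).mpr (.inl functional_point)

variable {a₁ a₂ a₃ k₁ k₂ k₃ : V} {g₁ g₂ g₃ : Dual K V}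

lemma linearIndependent (h₁ : IsDoublePolar T a₁ k₁ g₁) (h₂ : IsDoublePolar T a₂ k₂ g₂)
    (h₃ : IsDoublePolar T a₃ k₃ g₃) (h₁₂ : g₁ a₂ ≠ 0) (h₁₃ : g₁ a₃ ≠ 0) (h₂₃ : g₂ a₃ ≠ 0) :
    LinearIndependent K ![k₁, k₂, k₃] := by
  have t₁ : T k₁ a₂ a₃ ≠ 0 := by simp [h₁.apply_eq_zero_iff, h₁₂, h₁₃]
  have t₂ : T k₂ a₃ a₃ ≠ 0 := by simp [h₂.apply_eq_zero_iff, h₂₃]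
  have t₂' : T k₂ a₂ a₃ = 0 := by simp [h₂.apply_eq_zero_iff, h₂.functional_base]
  have t₃ (y : V) : T k₃ y a₃ = 0 := by simp [h₃.apply_eq_zero_iff, h₃.functional_base]
  rw [Fintype.linearIndependent_iff]
  intro c hc
  have relation : c 0 • k₁ + c 1 • k₂ + c 2 • k₃ = 0 := by simpa [Fin.sum_univ_three] using hc
  have pairing (y : V) : c 0 * T k₁ y a₃ + c 1 * T k₂ y a₃ = 0 := by
    simpa [t₃] using congrArg (fun v => T v y a₃) relation
  have c₀ : c 0 = 0 := by simpa [t₂', t₁] using pairing a₂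
  have c₁ : c 1 = 0 := by simpa [c₀, t₂] using pairing a₃
  have c₂ : c 2 = 0 := by simpa [c₀, c₁, h₃.point_ne_zero] using relation
  simp [Fin.forall_fin_succ, c₀, c₁, c₂]

end IsDoublePolar

lemma exists_finrank_eq_three_of_isDoublePolar (hT : IsSymmTrilinear T)
    (general : ∀ s : Finset (Dual K V), (∀ g ∈ s, g ≠ 0) →
      ∃ a k g, IsDoublePolar T a k g ∧ ∀ f ∈ s, f a ≠ 0) :
    ∃ W : Submodule K V, finrank K W = 3 ∧ ∀ x ∈ W, T x x = 0 := by
  classical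
  obtain ⟨a₁, k₁, g₁, h₁, -⟩ := general ∅ (by simp)
  obtain ⟨a₂, k₂, g₂, h₂, avoid₂⟩ := general {g₁} (by simpa using h₁.functional_ne_zero)
  obtain ⟨a₃, k₃, g₃, h₃, avoid₃⟩ :=
    general {g₁, g₂} (by simpa using ⟨h₁.functional_ne_zero, h₂.functional_ne_zero⟩)
  have h₁₂ : g₁ a₂ ≠ 0 := avoid₂ g₁ (by simp)
  obtain ⟨h₁₃, h₂₃⟩ : g₁ a₃ ≠ 0 ∧ g₂ a₃ ≠ 0 := by simpa using avoid₃
  have swap_eq_zero {x y : V} (h : T x y = 0) : T y x = 0 :=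
    LinearMap.ext fun z => by rw [hT.swap_left, h]
  have k₁_k₂ := h₁.apply_eq_zero_of_functional_ne_zero hT h₂ h₁₂
  have k₁_k₃ := h₁.apply_eq_zero_of_functional_ne_zero hT h₃ h₁₃
  have k₂_k₃ := h₂.apply_eq_zero_of_functional_ne_zero hT h₃ h₂₃
  refine ⟨Submodule.span K (Set.range ![k₁, k₂, k₃]), ?_, fun x hx => ?_⟩
  · rw [finrank_span_eq_card (h₁.linearIndependent h₂ h₃ h₁₂ h₁₃ h₂₃), Fintype.card_fin]
  · refine LinearMap.BilinMap.apply_apply_mem_of_mem_span ⊥ _ _ T ?_ x x hx hx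
    simp [h₁.apply_self, h₂.apply_self, h₃.apply_self, k₁_k₂, k₁_k₃, k₂_k₃,
      swap_eq_zero k₁_k₂, swap_eq_zero k₁_k₃, swap_eq_zero k₂_k₃]

end TrilinearForm

section Derivations

lemma sum_derivation_apply {κ R A M : Type*} [CommSemiring R] [CommSemiring A] [Algebra R A]
    [AddCommMonoid M] [Module A M] [Module R M] (s : Finset κ) (D : κ → Derivation R A M)
    (x : A) : (∑ j ∈ s, D j) x = ∑ j ∈ s, D j x := by
  rw [← Derivation.coeFnAddMonoidHom_apply, map_sum, Finset.sum_apply]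
  rfl

variable {ι R : Type*} [Fintype ι] [CommRing R]

/-- The directional derivative along a constant vector. The derivative along a polynomial vector
field `p` is `MvPolynomial.mkDerivation R p`. -/
noncomputable def dirDeriv :
    (ι → R) →ₗ[R] Derivation R (MvPolynomial ι R) (MvPolynomial ι R) :=
  Fintype.linearCombination R fun i => pderiv i

lemma dirDeriv_apply (v : ι → R) (f : MvPolynomial ι R) :
    dirDeriv v f = ∑ i, v i • pderiv i f :=
  sum_derivation_apply _ _ f

lemma dirDeriv_single [DecidableEq ι] (i : ι) (f : MvPolynomial ι R) :
    dirDeriv (Pi.single i 1) f = pderiv i f := by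
  simp [dirDeriv]

lemma dirDeriv_X (v : ι → R) (i : ι) : dirDeriv v (X i) = C (v i) := by
  classical simp [dirDeriv_apply, pderiv_X, Pi.single_apply, smul_eq_C_mul]

lemma mkDerivation_eq_sum (p : ι → MvPolynomial ι R) (f : MvPolynomial ι R) :
    mkDerivation R p f = ∑ i, p i * pderiv i f := by
  classical
  have eq_sum : mkDerivation R p = ∑ i, p i • pderiv i := by
    ext1 i
    simp [sum_derivation_apply, pderiv_X, Pi.single_apply]
  rw [eq_sum, sum_derivation_apply]
  rfl

lemma eval_mkDerivation (a : ι → R) (p : ι → MvPolynomial ι R) (f : MvPolynomial ι R) :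
    eval a (mkDerivation R p f) = eval a (dirDeriv (eval a ∘ p) f) := by
  simp [mkDerivation_eq_sum, dirDeriv_apply, smul_eval]

lemma dirDeriv_mkDerivation (v : ι → R) (p : ι → MvPolynomial ι R) (f : MvPolynomial ι R) :
    dirDeriv v (mkDerivation R p f) =
      mkDerivation R p (dirDeriv v f) + mkDerivation R (dirDeriv v ∘ p) f := by
  have commutator : ⁅dirDeriv v, mkDerivation R p⁆ = mkDerivation R (dirDeriv v ∘ p) := by
    ext1 i
    simp [Derivation.commutator_apply, dirDeriv_X]
  rw [← commutator, Derivation.commutator_apply, add_sub_cancel]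

lemma dirDeriv_comm (v w : ι → R) (f : MvPolynomial ι R) :
    dirDeriv v (dirDeriv w f) = dirDeriv w (dirDeriv v f) := by
  have commutator : ⁅dirDeriv v, dirDeriv w⁆ = 0 := by
    ext1 i
    simp [Derivation.commutator_apply, dirDeriv_X]
  rw [← sub_eq_zero, ← Derivation.commutator_apply, commutator, Derivation.zero_apply]

variable {f : MvPolynomial ι R} {d : ℕ}

lemma isHomogeneous_dirDeriv (hf : f.IsHomogeneous d) (v : ι → R) :
    (dirDeriv v f).IsHomogeneous (d - 1) := by
  rw [dirDeriv_apply]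
  exact IsHomogeneous.sum _ _ _ fun i _ =>
    Submodule.smul_mem (homogeneousSubmodule _ _ _) _ hf.pderiv

lemma eval_dirDeriv_self (hf : f.IsHomogeneous d) (x : ι → R) :
    eval x (dirDeriv x f) = d * eval x f := by
  simpa [dirDeriv_apply, smul_eval] using congrArg (eval x) hf.sum_X_mul_pderiv

end Derivations

section PolarForm

variable {ι R : Type*} [Fintype ι] [CommRing R] {F : MvPolynomial ι R}

/-- The symmetric trilinear form of third derivatives of `F` at the origin. For a cubic form `F`
its restriction to the diagonal is `6 F`. -/
noncomputable def polarForm (F : MvPolynomial ι R) :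
    (ι → R) →ₗ[R] LinearMap.BilinForm R (ι → R) where
  toFun x := LinearMap.mk₂ R
    (fun y z => constantCoeff (dirDeriv x (dirDeriv y (dirDeriv z F))))
    (by simp) (by simp) (by simp) (by simp)
  map_add' _ _ := by ext; simp
  map_smul' _ _ := by ext; simp

lemma polarForm_apply (x y z : ι → R) :
    polarForm F x y z = constantCoeff (dirDeriv x (dirDeriv y (dirDeriv z F))) :=
  rfl

lemma polarForm_swap_left (x y z : ι → R) : polarForm F x y z = polarForm F y x z := by
  rw [polarForm_apply, polarForm_apply, dirDeriv_comm]

lemma polarForm_swap_right (x y z : ι → R) : polarForm F x y z = polarForm F x z y := by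
  rw [polarForm_apply, polarForm_apply, dirDeriv_comm y]

lemma dirDeriv_dirDeriv_dirDeriv (hF : F.IsHomogeneous 3) (x y z : ι → R) :
    dirDeriv x (dirDeriv y (dirDeriv z F)) = C (polarForm F x y z) := by
  have h : (dirDeriv x (dirDeriv y (dirDeriv z F))).IsHomogeneous 0 :=
    isHomogeneous_dirDeriv (isHomogeneous_dirDeriv (isHomogeneous_dirDeriv hF z) y) x
  rw [← totalDegree_zero_iff_isHomogeneous, totalDegree_eq_zero_iff_eq_C] at h
  exact h

lemma eval_dirDeriv_dirDeriv (hF : F.IsHomogeneous 3) (x y z : ι → R) :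
    eval x (dirDeriv y (dirDeriv z F)) = polarForm F x y z := by
  have euler := eval_dirDeriv_self (isHomogeneous_dirDeriv (isHomogeneous_dirDeriv hF z) y) x
  rw [dirDeriv_dirDeriv_dirDeriv hF, eval_C] at euler
  simpa using euler.symm

lemma polarForm_self (hF : F.IsHomogeneous 3) (x z : ι → R) :
    polarForm F x x z = 2 * eval x (dirDeriv z F) := by
  rw [← eval_dirDeriv_dirDeriv hF, eval_dirDeriv_self (isHomogeneous_dirDeriv hF z)]
  simp

lemma polarForm_self_self (hF : F.IsHomogeneous 3) (x : ι → R) :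
    polarForm F x x x = 6 * eval x F := by
  rw [polarForm_self hF, eval_dirDeriv_self hF]
  push_cast
  ring

end PolarForm

section KernelField

open scoped Matrix

variable {ι R : Type*} [CommRing R] [IsDomain R] [Infinite R]

lemma exists_mulVec_eq_zero_of_forall_eval {κ : Type*} [Fintype κ]
    {A : Matrix κ κ (MvPolynomial ι R)}
    (h : ∀ a : ι → R, ∃ w ≠ 0, A.map (eval a) *ᵥ w = 0) : ∃ p ≠ 0, A *ᵥ p = 0 := by
  classical
  refine Matrix.exists_mulVec_eq_zero_iff.mpr (MvPolynomial.funext fun a => ?_)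
  rw [map_zero, RingHom.map_det]
  exact Matrix.exists_mulVec_eq_zero_iff.mp (h a)

lemma exists_eval_ne_zero_forall_apply_ne_zero [Finite ι] {Q : MvPolynomial ι R}
    (hQ : Q ≠ 0) {s : Finset (Dual R (ι → R))} (hs : ∀ g ∈ s, g ≠ 0) :
    ∃ a, eval a Q ≠ 0 ∧ ∀ g ∈ s, g a ≠ 0 := by
  classical
  cases nonempty_fintype ι
  let toPoly (g : Dual R (ι → R)) : MvPolynomial ι R := ∑ i, C (g (Pi.single i 1)) * X i
  have eval_toPoly (g : Dual R (ι → R)) (a : ι → R) : eval a (toPoly g) = g a := by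
    conv_rhs => rw [pi_eq_sum_univ' a]
    simp [toPoly, mul_comm]
  have toPoly_ne_zero (g) (hg : g ∈ s) : toPoly g ≠ 0 := fun h =>
    hs g hg (LinearMap.ext fun a => by rw [← eval_toPoly, h, map_zero, LinearMap.zero_apply])
  have product_ne_zero : Q * ∏ g ∈ s, toPoly g ≠ 0 :=
    mul_ne_zero hQ (Finset.prod_ne_zero_iff.mpr toPoly_ne_zero)
  obtain ⟨a, ha⟩ : ∃ a, eval a (Q * ∏ g ∈ s, toPoly g) ≠ 0 := by
    by_contra! h
    exact product_ne_zero (MvPolynomial.funext fun a => by rw [h a, map_zero])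
  rw [map_mul, map_prod, mul_ne_zero_iff, Finset.prod_ne_zero_iff] at ha
  exact ⟨a, ha.1, fun g hg => eval_toPoly g a ▸ ha.2 g hg⟩

variable [Fintype ι]

lemma exists_mkDerivation_dirDeriv_eq_zero {f : MvPolynomial ι R}
    (h : ∀ a : ι → R, ∃ w ≠ 0, ∀ v, eval a (dirDeriv w (dirDeriv v f)) = 0) :
    ∃ p : ι → MvPolynomial ι R, p ≠ 0 ∧ ∀ v, mkDerivation R p (dirDeriv v f) = 0 := by
  classical
  let hessian : Matrix ι ι (MvPolynomial ι R) := .of fun i j => pderiv j (pderiv i f)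
  obtain ⟨p, hp, hessian_p⟩ : ∃ p ≠ 0, hessian *ᵥ p = 0 := by
    refine exists_mulVec_eq_zero_of_forall_eval fun a => ?_
    obtain ⟨w, hw, hessian_w⟩ := h a
    refine ⟨w, hw, funext fun i => ?_⟩
    simpa [hessian, dirDeriv_single, dirDeriv_apply w, smul_eval, Matrix.mulVec, dotProduct,
      mul_comm] using hessian_w (Pi.single i 1)
  have kernel (i : ι) : mkDerivation R p (pderiv i f) = 0 := by
    simpa [hessian, mkDerivation_eq_sum, Matrix.mulVec, dotProduct, mul_comm]
      using congrFun hessian_p i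
  exact ⟨p, hp, fun v => by simp [dirDeriv_apply, kernel]⟩

end KernelField

section CubicForm

section CommRing

variable {ι R : Type*} [Fintype ι] [CommRing R] {F : MvPolynomial ι R}
  {p : ι → MvPolynomial ι R}

lemma isSymmTrilinear_polarForm : IsSymmTrilinear (polarForm F) :=
  ⟨polarForm_swap_left, polarForm_swap_right⟩

lemma eval_dirDeriv_mkDerivation_dirDeriv (hF : F.IsHomogeneous 3)
    (q : ι → MvPolynomial ι R) (a b v : ι → R) :
    eval a (dirDeriv b (mkDerivation R q (dirDeriv v F))) =
      polarForm F (eval a ∘ q) b v + polarForm F a (eval a ∘ dirDeriv b ∘ q) v := by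
  rw [dirDeriv_mkDerivation, map_add, eval_mkDerivation, eval_mkDerivation,
    dirDeriv_dirDeriv_dirDeriv hF, eval_C, eval_dirDeriv_dirDeriv hF]

lemma polarForm_eval_mkDerivation (hF : F.IsHomogeneous 3)
    (hp : ∀ v, mkDerivation R p (dirDeriv v F) = 0) (a v : ι → R) :
    polarForm F a (eval a ∘ p) v = 0 := by
  rw [← eval_dirDeriv_dirDeriv hF, ← eval_mkDerivation, hp, map_zero]

lemma polarForm_add_eq_zero (hF : F.IsHomogeneous 3)
    (hp : ∀ v, mkDerivation R p (dirDeriv v F) = 0) (a b v : ι → R) :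
    polarForm F (eval a ∘ p) b v + polarForm F a (eval a ∘ dirDeriv b ∘ p) v = 0 := by
  rw [← eval_dirDeriv_mkDerivation_dirDeriv hF, hp, map_zero, map_zero]

lemma polarForm_add_add_eq_zero (hF : F.IsHomogeneous 3)
    (hp : ∀ v, mkDerivation R p (dirDeriv v F) = 0) (a b c v : ι → R) :
    polarForm F (eval a ∘ dirDeriv c ∘ p) b v + polarForm F (eval a ∘ dirDeriv b ∘ p) c v +
      polarForm F a (eval a ∘ dirDeriv c ∘ dirDeriv b ∘ p) v = 0 := by
  have h : eval a (dirDeriv c (dirDeriv b (mkDerivation R p (dirDeriv v F)))) = 0 := by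
    rw [hp, map_zero, map_zero, map_zero]
  rw [dirDeriv_mkDerivation, map_add, map_add, eval_dirDeriv_mkDerivation_dirDeriv hF,
    dirDeriv_mkDerivation, dirDeriv_dirDeriv_dirDeriv hF, derivation_C, zero_add,
    eval_mkDerivation, dirDeriv_dirDeriv_dirDeriv hF, eval_C, ← add_assoc] at h
  exact h

lemma isKernelJet_polarForm [IsDomain R] [NeZero (2 : R)] (hF : F.IsHomogeneous 3)
    (hp : ∀ v, mkDerivation R p (dirDeriv v F) = 0) (a : ι → R) :
    IsKernelJet (polarForm F) a (eval a ∘ p) fun b => eval a ∘ dirDeriv b ∘ p := by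
  have hT := isSymmTrilinear_polarForm (F := F)
  have value (v : ι → R) := polarForm_eval_mkDerivation hF hp a v
  have first (b v : ι → R) := polarForm_add_eq_zero hF hp a b v
  refine ⟨LinearMap.ext value, fun b => LinearMap.ext fun v => ?_, fun b c => ?_⟩
  · exact eq_neg_of_add_eq_zero_left (first b v)
  · have second := polarForm_add_add_eq_zero hF hp a b c (eval a ∘ p)
    rw [hT.swap_right a, value, add_zero, hT.reverse, hT.reverse (eval a ∘ dirDeriv b ∘ p)]
      at second
    have first_bc := first b (eval a ∘ dirDeriv c ∘ p)
    have first_cb := first c (eval a ∘ dirDeriv b ∘ p)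
    rw [hT.swap_right a] at first_cb
    refine (mul_eq_zero.mp ?_).resolve_left (two_ne_zero (α := R))
    linear_combination first_bc + first_cb - second

lemma polarForm_eq_zero_of_dirDeriv_dirDeriv_eq_zero {v w : ι → R}
    (h : dirDeriv w (dirDeriv v F) = 0) : polarForm F v w = 0 := by
  ext1 z
  rw [isSymmTrilinear_polarForm.reverse, polarForm_apply, h]
  simp

lemma dirDeriv_eq_zero_of_polarForm_eq_zero [IsDomain R] [Infinite R] [NeZero (2 : R)]
    (hF : F.IsHomogeneous 3) {v : ι → R} (h : polarForm F v = 0) : dirDeriv v F = 0 := by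
  refine MvPolynomial.funext fun x => ?_
  have diagonal := polarForm_self hF x v
  rw [polarForm_swap_right, polarForm_swap_left, h] at diagonal
  simpa [two_ne_zero] using diagonal

end CommRing

variable {ι K : Type*} [Fintype ι] [Field K] [Infinite K] [NeZero (2 : K)] [NeZero (3 : K)]
  {F : MvPolynomial ι K} {p : ι → MvPolynomial ι K}

lemma exists_isDoublePolar_polarForm (hF : F.IsHomogeneous 3) (hι : Fintype.card ι ≤ 5)
    (hcone : ∀ v, polarForm F v = 0 → v = 0) (hp₀ : p ≠ 0)
    (hp : ∀ v, mkDerivation K p (dirDeriv v F) = 0) (s : Finset (Dual K (ι → K)))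
    (hs : ∀ g ∈ s, g ≠ 0) :
    ∃ a k g, IsDoublePolar (polarForm F) a k g ∧ ∀ f ∈ s, f a ≠ 0 := by
  classical
  obtain ⟨j, hj⟩ := Function.ne_iff.mp hp₀
  have hF₀ : F ≠ 0 := by
    rintro rfl
    have single_eq_zero := hcone (Pi.single j 1) <|
      LinearMap.ext₂ fun y z => by simp [polarForm_apply]
    simp at single_eq_zero
  obtain ⟨a, ha, avoid⟩ := exists_eval_ne_zero_forall_apply_ne_zero (mul_ne_zero hj hF₀) hs
  rw [map_mul, mul_ne_zero_iff] at ha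
  have value_ne_zero : polarForm F (eval a ∘ p) ≠ 0 := fun h =>
    ha.1 (congrFun (hcone _ h) j)
  have diagonal_ne_zero : polarForm F a a a ≠ 0 := by
    rw [polarForm_self_self hF, show (6 : K) = 2 * 3 by norm_num]
    exact mul_ne_zero (mul_ne_zero two_ne_zero three_ne_zero) ha.2
  obtain ⟨g, hg⟩ := (isKernelJet_polarForm hF hp a).exists_isDoublePolar
    isSymmTrilinear_polarForm (by simpa using hι) value_ne_zero diagonal_ne_zero
  exact ⟨a, _, g, hg, avoid⟩

end CubicForm

end VanishingHessian

open VanishingHessian in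
theorem stmt_4_general {K : Type*} [Field K] [Infinite K] [NeZero (2 : K)] [NeZero (3 : K)]
    (F : MvPolynomial (Fin 5) K) (hF : F.IsHomogeneous 3)
    (hdeg : ∀ v : Fin 5 → K, ∃ w : Fin 5 → K, w ≠ 0 ∧
      ∑ j, w j • pderiv j (∑ i, v i • pderiv i F) = 0)
    (hnotcone : ¬ ∃ v : Fin 5 → K, v ≠ 0 ∧ ∑ i, v i • pderiv i F = 0) :
    ∃ W : Submodule K (Fin 5 → K), Module.finrank K W = 3 ∧
      ∀ x ∈ W, ∀ i, MvPolynomial.eval x (pderiv i F) = 0 := by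
  simp only [← dirDeriv_apply] at hdeg hnotcone
  have hcone (v : Fin 5 → K) (hv : polarForm F v = 0) : v = 0 := by
    by_contra hne
    exact hnotcone ⟨v, hne, dirDeriv_eq_zero_of_polarForm_eq_zero hF hv⟩
  obtain ⟨p, hp₀, hp⟩ : ∃ p : Fin 5 → MvPolynomial (Fin 5) K,
      p ≠ 0 ∧ ∀ v, mkDerivation K p (dirDeriv v F) = 0 := by
    refine exists_mkDerivation_dirDeriv_eq_zero fun a => ?_
    obtain ⟨w, hw, haw⟩ := hdeg a
    refine ⟨w, hw, fun v => ?_⟩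
    rw [eval_dirDeriv_dirDeriv hF, polarForm_eq_zero_of_dirDeriv_dirDeriv_eq_zero haw,
      LinearMap.zero_apply]
  obtain ⟨W, hW, polar_eq_zero⟩ := exists_finrank_eq_three_of_isDoublePolar
    isSymmTrilinear_polarForm (exists_isDoublePolar_polarForm hF (by simp) hcone hp₀ hp)
  refine ⟨W, hW, fun x hx i => ?_⟩
  have diagonal := polarForm_self hF x (Pi.single i 1)
  rw [polar_eq_zero x hx, LinearMap.zero_apply, dirDeriv_single] at diagonal
  exact (mul_eq_zero.mp diagonal.symm).resolve_left two_ne_zero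

/-- (Lossen's classification.) A homogeneous cubic in 5 variables all of whose directional
derivatives are degenerate quadratic forms, and which is not a cone, is singular along a
projective plane, i.e. all its first partial derivatives vanish on a 3-dimensional linear
subspace `W ⊆ ℂ⁵`. -/
theorem stmt_4 (F : MvPolynomial (Fin 5) ℂ) (hF : F.IsHomogeneous 3)
    (hdeg : ∀ v : Fin 5 → ℂ, ∃ w : Fin 5 → ℂ, w ≠ 0 ∧
      ∑ j, w j • pderiv j (∑ i, v i • pderiv i F) = 0)
    (hnotcone : ¬ ∃ v : Fin 5 → ℂ, v ≠ 0 ∧ ∑ i, v i • pderiv i F = 0) :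
    ∃ W : Submodule ℂ (Fin 5 → ℂ), Module.finrank ℂ W = 3 ∧
      ∀ x ∈ W, ∀ i, MvPolynomial.eval x (pderiv i F) = 0 :=
  stmt_4_general F hF hdeg hnotcone
end

section
/- Let A, B, C be homogeneous linear forms in X₀, …, X₄ over ℂ whose restrictions to the subspace W = { x ∈ ℂ⁵ : x₀ = x₁ = 0 } are linearly independent, and set F = X₀²·A + X₁²·B + X₀X₁·C. Let q be a homogeneous quadratic polynomial in X₀, …, X₄ over ℂ such that for every μ ∈ ℂ and every v ∈ ℂ⁵ the quadric μ·q − ∂_v F is degenerate. Then q vanishes at every point of W. -/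
open MvPolynomial

/-!
For a vector `v`, singularity of the whole pencil `μ q - ∂ᵥF` forces `∂ᵥF` to have a singular
vector `k ≠ 0` such that `∂ₖq = ∂ₘ∂ᵥF` for some `m`: restrict the pencil to the vectors `u` with
`∂ᵤq` of the form `∂ₘ∂ᵥF`; if `∂ᵥF` had no singular vector there, the pencil would become an
eigenvalue problem, with finitely many eigenvalues. Hence `k` is orthogonal for `q` to all singular
vectors of `∂ᵥF`.

In the coordinates `X₀, X₁, A, B, C`, the singular vectors of `∂ᵥF` for `v = (1, t, 0, 0, 0)` are
the multiples of `(0, 0, t², 1, -2t)`, so `q` vanishes on a smooth conic of the projective plane of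
`W`. For `v = (0, 0, 0, 0, 1)` they are all of `W`, so `q` is degenerate on `W`. A conic that
contains a smooth conic is a multiple of it, and it can only be degenerate if it is zero.
-/

section Pencil

variable {K V W : Type*} [Field K] [Infinite K] [AddCommGroup V] [Module K V]
  [FiniteDimensional K V] [AddCommGroup W] [Module K W]

theorem exists_forall_smul_eq_imp_eq_zero (f : V →ₗ[K] W) {g : V →ₗ[K] W}
    (hg : Function.Injective g) : ∃ μ : K, μ ≠ 0 ∧ ∀ v, μ • f v = g v → v = 0 := by
  obtain ⟨r, hr⟩ := g.exists_leftInverse_of_injective (LinearMap.ker_eq_bot.mpr hg)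
  obtain ⟨μ, hμ⟩ := ((Module.End.finite_hasEigenvalue (r ∘ₗ f)).union
    (Set.finite_singleton 0)).exists_notMem
  simp only [Set.mem_union, Set.mem_ofPred_eq, Set.mem_singleton_iff, not_or] at hμ
  refine ⟨μ⁻¹, inv_ne_zero hμ.2, fun v hv => ?_⟩
  by_contra hv0
  refine hμ.1 (Module.End.hasEigenvalue_of_hasEigenvector
    (Module.End.hasEigenvector_iff.mpr ⟨Module.End.mem_eigenspace_iff.mpr ?_, hv0⟩))
  have hfv : f v = μ • g v := by rw [← hv, smul_inv_smul₀ hμ.2]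
  rw [LinearMap.comp_apply, hfv, map_smul, ← LinearMap.comp_apply, hr, LinearMap.id_apply]

theorem exists_ne_zero_mem_ker_apply_mem_range {f g : V →ₗ[K] W}
    (h : ∀ μ : K, ∃ v, v ≠ 0 ∧ μ • f v = g v) :
    ∃ k, k ≠ 0 ∧ g k = 0 ∧ f k ∈ LinearMap.range g := by
  by_contra! hker
  let U := (LinearMap.range g).comap f
  have hg : Function.Injective (g.domRestrict U) :=
    (injective_iff_map_eq_zero _).mpr fun k hk =>
      Subtype.ext (by_contra fun hk0 => hker k hk0 hk k.2)
  obtain ⟨μ, hμ, hinj⟩ := exists_forall_smul_eq_imp_eq_zero (f.domRestrict U) hg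
  obtain ⟨v, hv, hfg⟩ := h μ
  have hvU : v ∈ U := ⟨μ⁻¹ • v, by rw [map_smul, ← hfg, inv_smul_smul₀ hμ]⟩
  exact hv (congrArg Subtype.val (hinj ⟨v, hvU⟩ hfg))

end Pencil

section Conic

variable {K : Type*} [Field K] [Infinite K] [NeZero (2 : K)]

theorem bilinForm_apply_of_vanishing_on_conic {b : LinearMap.BilinForm K (Fin 3 → K)}
    (hb : b.IsSymm) (hconic : ∀ t : K, b ![t ^ 2, 1, -2 * t] ![t ^ 2, 1, -2 * t] = 0)
    (x y : Fin 3 → K) :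
    b x y = b (Pi.single 2 1) (Pi.single 2 1) * (x 2 * y 2 - 2 * (x 0 * y 1 + x 1 * y 0)) := by
  let G (i j : Fin 3) : K := b (Pi.single i 1) (Pi.single j 1)
  have expand (x y : Fin 3 → K) : b x y = ∑ i, ∑ j, x i * (y j * G i j) := by
    conv_lhs => rw [pi_eq_sum_univ' x, pi_eq_sum_univ' y]
    simp only [G, Fin.sum_univ_three, map_add, map_smul, LinearMap.add_apply,
      LinearMap.smul_apply, smul_eq_mul]
    ring
  have symm (i j : Fin 3) : G i j = G j i := hb.eq _ _
  have coeffs : ![G 1 1, -(2 * (2 * G 1 2)), 2 * (G 0 1 + 2 * G 2 2), -(2 * (2 * G 0 2)),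
      G 0 0] = 0 := by
    refine Matrix.eq_zero_of_forall_index_sum_pow_mul_eq_zero
      (f := fun j : Fin 5 => Infinite.natEmbedding K j)
      ((Infinite.natEmbedding K).injective.comp Fin.val_injective) fun j => ?_
    have h := hconic (Infinite.natEmbedding K j)
    rw [expand] at h
    simp only [Fin.sum_univ_three, symm 1 0, symm 2 0, symm 2 1, Matrix.cons_val] at h
    simp only [Fin.sum_univ_five, Matrix.cons_val, Fin.coe_ofNat_eq_mod, Nat.reduceMod]
    linear_combination h
  have h2 : (2 : K) ≠ 0 := two_ne_zero
  have h11 : G 1 1 = 0 := congrFun coeffs 0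
  have h12 : G 1 2 = 0 := by simpa [h2] using congrFun coeffs 1
  have h01 : G 0 1 = -(2 * G 2 2) :=
    eq_neg_of_add_eq_zero_left (by simpa [h2] using congrFun coeffs 2)
  have h02 : G 0 2 = 0 := by simpa [h2] using congrFun coeffs 3
  have h00 : G 0 0 = 0 := congrFun coeffs 4
  change b x y = G 2 2 * _
  simp only [expand x y, Fin.sum_univ_three, symm 1 0, symm 2 0, symm 2 1, h00, h11, h12, h02, h01]
  ring

theorem bilinForm_eq_zero_of_vanishing_on_conic {b : LinearMap.BilinForm K (Fin 3 → K)}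
    (hb : b.IsSymm) (hconic : ∀ t : K, b ![t ^ 2, 1, -2 * t] ![t ^ 2, 1, -2 * t] = 0)
    {k : Fin 3 → K} (hk : k ≠ 0) (hbk : ∀ n, b n k = 0) : b = 0 := by
  have happly := bilinForm_apply_of_vanishing_on_conic hb hconic
  suffices hc : b (Pi.single 2 1) (Pi.single 2 1) = 0 from
    LinearMap.ext₂ fun x y => by rw [happly, hc, zero_mul]; rfl
  by_contra hc
  refine hk (funext fun i => ?_)
  have h (n : Fin 3 → K) : n 2 * k 2 - 2 * (n 0 * k 1 + n 1 * k 0) = 0 := by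
    simpa [happly n k, hc] using hbk n
  have h2 : (2 : K) ≠ 0 := two_ne_zero
  fin_cases i
  · simpa [h2] using h (Pi.single 1 1)
  · simpa [h2] using h (Pi.single 0 1)
  · simpa using h (Pi.single 2 1)

end Conic

section DirectionalDerivative

variable {σ R : Type*} [Fintype σ] [CommRing R]

/-- The directional derivative `∂ᵥ = ∑ i, v i ∂/∂Xᵢ` on polynomials, as a derivation depending
linearly on the direction `v`. -/
noncomputable def dirDeriv : (σ → R) →ₗ[R] Derivation R (MvPolynomial σ R) (MvPolynomial σ R) :=
  Fintype.linearCombination R pderiv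

theorem dirDeriv_apply (v : σ → R) (p : MvPolynomial σ R) :
    dirDeriv v p = ∑ i, v i • pderiv i p := by
  have h := map_sum Derivation.coeFnAddMonoidHom (fun i => v i • pderiv (R := R) i) Finset.univ
  exact (congrFun h p).trans (Finset.sum_apply p _ _)

theorem dirDeriv_X (v : σ → R) (i : σ) : dirDeriv v (X i) = C (v i) := by
  classical
  simp [dirDeriv_apply, pderiv_X, Pi.single_apply, smul_eq_C_mul]

theorem dirDeriv_comm (v w : σ → R) (p : MvPolynomial σ R) :
    dirDeriv v (dirDeriv w p) = dirDeriv w (dirDeriv v p) := by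
  have h : ⁅dirDeriv v, dirDeriv w⁆ = 0 := derivation_ext fun i => by
    simp [Derivation.commutator_apply, dirDeriv_X]
  rw [← sub_eq_zero, ← Derivation.commutator_apply, h, Derivation.zero_apply]

theorem isHomogeneous_dirDeriv {p : MvPolynomial σ R} {n : ℕ} (hp : p.IsHomogeneous n)
    (v : σ → R) : (dirDeriv v p).IsHomogeneous (n - 1) := by
  rw [dirDeriv_apply]
  refine IsHomogeneous.sum _ _ _ fun i _ => ?_
  rw [smul_eq_C_mul, ← zero_add (n - 1)]
  exact (isHomogeneous_C σ (v i)).mul hp.pderiv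

theorem eval_dirDeriv_self {p : MvPolynomial σ R} {n : ℕ} (hp : p.IsHomogeneous n) (v : σ → R) :
    eval v (dirDeriv v p) = n * eval v p := by
  simpa [dirDeriv_apply] using congrArg (eval v) hp.sum_X_mul_pderiv

theorem dirDeriv_eq_C_eval {L : MvPolynomial σ R} (hL : L.IsHomogeneous 1) (v : σ → R) :
    dirDeriv v L = C (eval v L) := by
  have hconst := totalDegree_eq_zero_iff_eq_C.mp
    ((totalDegree_zero_iff_isHomogeneous _).mpr (isHomogeneous_dirDeriv hL v))
  have heval := eval_dirDeriv_self hL v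
  rw [hconst, eval_C, Nat.cast_one, one_mul] at heval
  rw [hconst, heval]

/-- The Hessian of a polynomial at the origin, as a bilinear form. For a quadratic form `q` it is
the polar form of `q`. -/
noncomputable def hessian (p : MvPolynomial σ R) : LinearMap.BilinForm R (σ → R) :=
  LinearMap.mk₂ R (fun v w => constantCoeff (dirDeriv v (dirDeriv w p)))
    (by simp) (by simp) (by simp) (by simp)

theorem hessian_apply (p : MvPolynomial σ R) (v w : σ → R) :
    hessian p v w = constantCoeff (dirDeriv v (dirDeriv w p)) :=
  rfl

theorem isSymm_hessian (p : MvPolynomial σ R) : (hessian p).IsSymm :=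
  ⟨fun v w => by rw [hessian_apply, hessian_apply, dirDeriv_comm]⟩

theorem hessian_self {q : MvPolynomial σ R} (hq : q.IsHomogeneous 2) (v : σ → R) :
    hessian q v v = 2 * eval v q := by
  rw [hessian_apply, dirDeriv_eq_C_eval (isHomogeneous_dirDeriv hq v), constantCoeff_C,
    eval_dirDeriv_self hq, Nat.cast_ofNat]

end DirectionalDerivative

section LinearForm

theorem isLinearMap_eval {σ R : Type*} [Finite σ] [CommRing R] {L : MvPolynomial σ R}
    (hL : L.IsHomogeneous 1) : IsLinearMap R fun v : σ → R => eval v L := by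
  have := Fintype.ofFinite σ
  refine ⟨fun v w => C_injective σ R ?_, fun c v => C_injective σ R ?_⟩
  · simp only [← dirDeriv_eq_C_eval hL, map_add, Derivation.add_apply]
  · simp only [← dirDeriv_eq_C_eval hL, map_smul, Derivation.smul_apply, smul_eq_mul, C_mul,
      smul_eq_C_mul]

end LinearForm

section InfiniteField

variable {σ ι K : Type*} [Fintype σ] [Fintype ι] [Field K] [Infinite K]

theorem exists_dirDeriv_eq_zero_of_singular_pencil {p q : MvPolynomial σ K}
    (h : ∀ μ : K, ∃ w, w ≠ 0 ∧ dirDeriv w (μ • q - p) = 0) :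
    ∃ k, k ≠ 0 ∧ dirDeriv k p = 0 ∧ ∀ n, dirDeriv n p = 0 → hessian q n k = 0 := by
  let grad (r : MvPolynomial σ K) : (σ → K) →ₗ[K] MvPolynomial σ K :=
    { toFun := fun v => dirDeriv v r
      map_add' := by simp
      map_smul' := by simp }
  obtain ⟨k, hk, hkp, m, hm⟩ := exists_ne_zero_mem_ker_apply_mem_range
    (f := grad q) (g := grad p) fun μ => (h μ).imp fun w hw => ⟨hw.1, by
      simpa [grad, sub_eq_zero] using hw.2⟩
  refine ⟨k, hk, hkp, fun n hn => ?_⟩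
  change dirDeriv m p = dirDeriv k q at hm
  rw [hessian_apply, ← hm, dirDeriv_comm, hn, map_zero, map_zero]

theorem exists_linearEquiv_eval {L : ι → MvPolynomial σ K} (hL : ∀ i, (L i).IsHomogeneous 1)
    (hindep : LinearIndependent K L) (hcard : Fintype.card ι = Fintype.card σ) :
    ∃ Ψ : (σ → K) ≃ₗ[K] (ι → K), ∀ v i, Ψ v i = eval v (L i) := by
  let Ψ : (σ → K) →ₗ[K] (ι → K) := LinearMap.pi fun i => (isLinearMap_eval (hL i)).mk'
  have hfun : LinearIndependent K fun i (v : σ → K) => eval v (L i) := by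
    rw [Fintype.linearIndependent_iff] at hindep ⊢
    refine fun g hg => hindep g (MvPolynomial.funext fun v => ?_)
    simpa [smul_eval] using congrFun hg v
  have hsurj : Function.Surjective Ψ := by
    rw [← LinearMap.range_eq_top, ← span_flip_eq_top_iff_linearIndependent.mpr hfun]
    exact (Submodule.span_eq (LinearMap.range Ψ)).symm
  have hinj : Function.Injective Ψ :=
    (LinearMap.injective_iff_surjective_of_finrank_eq_finrank (by simp [hcard])).mpr hsurj
  exact ⟨LinearEquiv.ofBijective Ψ ⟨hinj, hsurj⟩, fun _ _ => rfl⟩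

end InfiniteField

section Cubic

variable {σ R : Type*} [Fintype σ] [CommRing R]

/-- The cubic `L₀² L₂ + L₁² L₃ + L₀ L₁ L₄` in five linear forms `L`, which is singular along
`L₀ = L₁ = 0`. -/
noncomputable def cubicOfForms (L : Fin 5 → MvPolynomial σ R) : MvPolynomial σ R :=
  L 0 ^ 2 * L 2 + L 1 ^ 2 * L 3 + L 0 * L 1 * L 4

/-- The coefficients of the linear form `∂_z ∂_y (T₀² T₂ + T₁² T₃ + T₀ T₁ T₄)`, the second polar of
the cubic of `cubicOfForms` in the coordinates `T`. -/
def polarCoeff (y z : Fin 5 → R) : Fin 5 → R :=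
  ![2 * (y 0 * z 2 + y 2 * z 0) + y 1 * z 4 + y 4 * z 1,
    2 * (y 1 * z 3 + y 3 * z 1) + y 0 * z 4 + y 4 * z 0,
    2 * (y 0 * z 0), 2 * (y 1 * z 1), y 0 * z 1 + y 1 * z 0]

theorem dirDeriv_dirDeriv_cubicOfForms {L : Fin 5 → MvPolynomial σ R}
    (hL : ∀ i, (L i).IsHomogeneous 1) (v w : σ → R) :
    dirDeriv w (dirDeriv v (cubicOfForms L)) =
      ∑ i, polarCoeff (fun i => eval v (L i)) (fun i => eval w (L i)) i • L i := by
  have hC2 : (C 2 : MvPolynomial σ R) = 2 := map_ofNat C 2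
  simp only [cubicOfForms, polarCoeff, Fin.sum_univ_five, sq, map_add, Derivation.leibniz,
    dirDeriv_eq_C_eval (hL _), derivation_C, smul_eq_mul, smul_eq_C_mul, mul_zero, zero_add,
    Matrix.cons_val, C_mul, hC2]
  ring

/-- The parametrization of the plane `y₀ = y₁ = 0`. -/
def planeEmbedding : (Fin 3 → R) →ₗ[R] (Fin 5 → R) :=
  LinearMap.pi ![0, 0, .proj 0, .proj 1, .proj 2]

theorem planeEmbedding_apply (a : Fin 3 → R) : planeEmbedding a = ![0, 0, a 0, a 1, a 2] := by
  ext i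
  fin_cases i <;> rfl

theorem mem_range_planeEmbedding {y : Fin 5 → R} :
    y ∈ LinearMap.range planeEmbedding ↔ y 0 = 0 ∧ y 1 = 0 := by
  refine ⟨?_, fun ⟨h0, h1⟩ => ⟨![y 2, y 3, y 4], ?_⟩⟩
  · rintro ⟨a, rfl⟩
    simp [planeEmbedding_apply]
  · ext i
    fin_cases i <;> simp [planeEmbedding_apply, h0, h1]

theorem polarCoeff_last_eq_zero_iff {z : Fin 5 → R} :
    polarCoeff ![0, 0, 0, 0, 1] z = 0 ↔ z ∈ LinearMap.range planeEmbedding := by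
  rw [mem_range_planeEmbedding]
  refine ⟨fun h => ⟨by simpa [polarCoeff] using congrFun h 1,
    by simpa [polarCoeff] using congrFun h 0⟩, fun ⟨h0, h1⟩ => ?_⟩
  ext i
  fin_cases i <;> simp [polarCoeff, h0, h1]

theorem linearIndependent_X_zero_X_one_of_restrict {A B C : MvPolynomial (Fin 5) R}
    (h : ∀ a b c : R, (∀ x : Fin 5 → R, x 0 = 0 → x 1 = 0 →
        a * eval x A + b * eval x B + c * eval x C = 0) → a = 0 ∧ b = 0 ∧ c = 0) :
    LinearIndependent R ![X 0, X 1, A, B, C] := by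
  refine Fintype.linearIndependent_iff.mpr fun g hg => ?_
  have hsum (x : Fin 5 → R) : g 0 * x 0 + g 1 * x 1
      + g 2 * eval x A + g 3 * eval x B + g 4 * eval x C = 0 := by
    simpa [Fin.sum_univ_five, smul_eval] using congrArg (eval x) hg
  obtain ⟨h2, h3, h4⟩ := h (g 2) (g 3) (g 4) fun x hx0 hx1 => by simpa [hx0, hx1] using hsum x
  have h0 : g 0 = 0 := by simpa [h2, h3, h4] using hsum (Pi.single 0 1)
  have h1 : g 1 = 0 := by simpa [h2, h3, h4] using hsum (Pi.single 1 1)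
  intro i
  fin_cases i <;> assumption

end Cubic

section QuadricThroughPlane

variable {σ K : Type*} [Fintype σ] [Field K] [NeZero (2 : K)]

theorem eq_smul_of_polarCoeff_eq_zero {t : K} {z : Fin 5 → K}
    (h : polarCoeff ![1, t, 0, 0, 0] z = 0) :
    z = z 3 • planeEmbedding ![t ^ 2, 1, -2 * t] := by
  have h2 : (2 : K) ≠ 0 := two_ne_zero
  have hz0 : z 0 = 0 := by simpa [polarCoeff, h2] using congrFun h 2
  have hz1 : z 1 = 0 := by simpa [polarCoeff, hz0] using congrFun h 4
  have hz4 : z 4 = -2 * t * z 3 := by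
    have h1 : 2 * (t * z 3) + z 4 = 0 := by simpa [polarCoeff, hz1] using congrFun h 1
    linear_combination h1
  have hz2 : z 2 = t ^ 2 * z 3 := by
    have h0 : 2 * z 2 + t * z 4 = 0 := by simpa [polarCoeff, hz0] using congrFun h 0
    refine mul_left_cancel₀ h2 ?_
    linear_combination h0 - t * hz4
  ext i
  fin_cases i <;> simp [planeEmbedding_apply, hz0, hz1, hz2, hz4, mul_comm]

variable [Infinite K]

theorem compl₁₂_planeEmbedding_eq_zero {B : LinearMap.BilinForm K (Fin 5 → K)} (hB : B.IsSymm)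
    (h : ∀ y, ∃ z, z ≠ 0 ∧ polarCoeff y z = 0 ∧ ∀ n, polarCoeff y n = 0 → B n z = 0) :
    B.compl₁₂ planeEmbedding planeEmbedding = 0 := by
  have hconic (t : K) : B (planeEmbedding ![t ^ 2, 1, -2 * t])
      (planeEmbedding ![t ^ 2, 1, -2 * t]) = 0 := by
    obtain ⟨z, hz, hyz, hBz⟩ := h ![1, t, 0, 0, 0]
    have hz_eq := eq_smul_of_polarCoeff_eq_zero hyz
    have hz3 : z 3 ≠ 0 := fun h3 => hz (by rw [hz_eq, h3, zero_smul])
    have hzz := hBz z hyz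
    rw [hz_eq] at hzz
    simpa [hz3] using hzz
  obtain ⟨z, hz, hyz, hBz⟩ := h ![0, 0, 0, 0, 1]
  obtain ⟨k, rfl⟩ := polarCoeff_last_eq_zero_iff.mp hyz
  exact bilinForm_eq_zero_of_vanishing_on_conic ⟨fun _ _ => hB.eq _ _⟩ hconic
    (k := k) (fun hk => hz (by rw [hk, map_zero]))
    fun n => hBz _ (polarCoeff_last_eq_zero_iff.mpr ⟨n, rfl⟩)

theorem eval_eq_zero_of_singular_polar_pencils {L : Fin 5 → MvPolynomial σ K}
    (hL : ∀ i, (L i).IsHomogeneous 1) (hindep : LinearIndependent K L)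
    (hcard : Fintype.card σ = 5) {q : MvPolynomial σ K} (hq : q.IsHomogeneous 2)
    (hdeg : ∀ (μ : K) (v : σ → K), ∃ w, w ≠ 0 ∧
      dirDeriv w (μ • q - dirDeriv v (cubicOfForms L)) = 0)
    {x : σ → K} (hx0 : eval x (L 0) = 0) (hx1 : eval x (L 1) = 0) : eval x q = 0 := by
  obtain ⟨Ψ, hΨ⟩ := exists_linearEquiv_eval hL hindep (by simp [hcard])
  have hpolar (v w : σ → K) :
      dirDeriv w (dirDeriv v (cubicOfForms L)) = 0 ↔ polarCoeff (Ψ v) (Ψ w) = 0 := by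
    rw [dirDeriv_dirDeriv_cubicOfForms hL, ← funext (hΨ v), ← funext (hΨ w)]
    refine ⟨fun h => funext (Fintype.linearIndependent_iff.mp hindep _ h), fun h => ?_⟩
    simp [h]
  let B := (hessian q).compl₁₂ Ψ.symm.toLinearMap Ψ.symm.toLinearMap
  have hB : B.compl₁₂ planeEmbedding planeEmbedding = 0 := by
    refine compl₁₂_planeEmbedding_eq_zero ⟨fun _ _ => (isSymm_hessian q).eq _ _⟩ fun y => ?_
    obtain ⟨k, hk, hker, hq_k⟩ :=
      exists_dirDeriv_eq_zero_of_singular_pencil fun μ => hdeg μ (Ψ.symm y)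
    refine ⟨Ψ k, by simpa using hk, by simpa using (hpolar _ _).mp hker, fun n hn => ?_⟩
    simpa [B] using hq_k (Ψ.symm n) ((hpolar _ _).mpr (by simpa using hn))
  obtain ⟨a, ha⟩ := mem_range_planeEmbedding.mpr
    ⟨(hΨ x 0).trans hx0, (hΨ x 1).trans hx1⟩
  have hxx : hessian q x x = 0 := by
    simpa [B, ha] using LinearMap.congr_fun₂ hB a a
  simpa [hessian_self hq, two_ne_zero] using hxx

theorem stmt_8_general (A B C : MvPolynomial (Fin 5) K)
    (hA : A.IsHomogeneous 1) (hB : B.IsHomogeneous 1) (hC : C.IsHomogeneous 1)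
    (hindep : ∀ a b c : K,
      (∀ x : Fin 5 → K, x 0 = 0 → x 1 = 0 →
        a * eval x A + b * eval x B + c * eval x C = 0) → a = 0 ∧ b = 0 ∧ c = 0)
    (q : MvPolynomial (Fin 5) K) (hq : q.IsHomogeneous 2)
    (hdeg : ∀ μ : K, ∀ v : Fin 5 → K, ∃ w : Fin 5 → K, w ≠ 0 ∧
      ∑ j, w j • pderiv j
        (μ • q - ∑ i, v i • pderiv i (X 0 ^ 2 * A + X 1 ^ 2 * B + X 0 * X 1 * C)) = 0) :
    ∀ x : Fin 5 → K, x 0 = 0 → x 1 = 0 → eval x q = 0 := by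
  intro x hx0 hx1
  have hL (i : Fin 5) : (![X 0, X 1, A, B, C] i : MvPolynomial (Fin 5) K).IsHomogeneous 1 := by
    fin_cases i
    exacts [isHomogeneous_X K 0, isHomogeneous_X K 1, hA, hB, hC]
  refine eval_eq_zero_of_singular_polar_pencils hL
    (linearIndependent_X_zero_X_one_of_restrict hindep) (Fintype.card_fin 5) hq
    (fun μ v => ?_) (by simpa using hx0) (by simpa using hx1)
  simpa only [dirDeriv_apply, cubicOfForms, Matrix.cons_val] using hdeg μ v

end QuadricThroughPlane

/-- (Key step in the proof of Proposition on dimension 10, part (ii).) Let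
`F = X₀²·A + X₁²·B + X₀X₁·C` with `A, B, C` linear forms whose restrictions to
`W = {x₀ = x₁ = 0}` are linearly independent. If `q` is a quadratic form such that
`μ·q - ∂_v F` is degenerate for all `μ ∈ ℂ` and all `v ∈ ℂ⁵`, then `q` vanishes on `W`. -/
theorem stmt_8 (A B C : MvPolynomial (Fin 5) ℂ)
    (hA : A.IsHomogeneous 1) (hB : B.IsHomogeneous 1) (hC : C.IsHomogeneous 1)
    (hindep : ∀ a b c : ℂ,
      (∀ x : Fin 5 → ℂ, x 0 = 0 → x 1 = 0 →
        a * MvPolynomial.eval x A + b * MvPolynomial.eval x B + c * MvPolynomial.eval x C = 0) →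
      a = 0 ∧ b = 0 ∧ c = 0)
    (q : MvPolynomial (Fin 5) ℂ) (hq : q.IsHomogeneous 2)
    (hdeg : ∀ μ : ℂ, ∀ v : Fin 5 → ℂ, ∃ w : Fin 5 → ℂ, w ≠ 0 ∧
      ∑ j, w j • pderiv j
        (μ • q - ∑ i, v i • pderiv i (X 0 ^ 2 * A + X 1 ^ 2 * B + X 0 * X 1 * C)) = 0) :
    ∀ x : Fin 5 → ℂ, x 0 = 0 → x 1 = 0 → MvPolynomial.eval x q = 0 :=
  stmt_8_general A B C hA hB hC hindep q hq hdeg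
end

section
/- Let V ⊆ ℂ^n be an open set and let f, f₁, …, f_{2n} : V → ℂ be holomorphic functions such that at every point b ∈ V the complex differentials df₁(b), …, df_{2n}(b) are linearly independent over ℝ (as real-linear functionals on ℂ^n), and let a = (a₁, …, a_{2n}) : V → ℝ^{2n} be the unique map with real values such that df(b) = Σᵢ aᵢ(b)·dfᵢ(b) for every b ∈ V. Assume the real derivative da_b has constant rank r at every b ∈ V. Then the fibers of a are affine in the coordinates xᵢ = Re fᵢ: for every c ∈ ℝ^{2n} and every connected component F of a^{-1}(c), there exist a surjective linear map L : ℝ^{2n} → ℝ^r and a point c′ ∈ ℝ^r such that L(Re f₁(p), …, Re f_{2n}(p)) = c′ for every p ∈ F. -/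
/-!
Differentiating `df = ∑ aᵢ dfᵢ` and using that second derivatives are symmetric gives
`∑ daᵢ ∧ dfᵢ = 0`. As the `aᵢ` are real, its real part says that, with `x = Re (fᵢ)`, the form
`(u, v) ↦ da u ⬝ᵥ dx v` is symmetric; hence `dx` maps `ker da` into the orthogonal complement of
`range da`. By the constant rank theorem, `ker da` is the tangent space of the fibre of `a` and
`range da` is locally constant along the fibre. So `w ⬝ᵥ x` is constant on each component of the
fibre for every `w` in the common `r`-dimensional range, and the rows of `L` are a basis of it.
The existence of second derivatives on an open subset of a complex Banach space comes from
Cauchy's estimate.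
-/

open Metric Set Filter Topology

section Holomorphic

variable {E F : Type*} [NormedAddCommGroup E] [NormedSpace ℂ E]
  [NormedAddCommGroup F] [NormedSpace ℂ F] {f : E → F} {U : Set E} {z : E}

theorem norm_fderiv_le_of_forall_mem_ball_norm_le {R C : ℝ} (hR : 0 < R)
    (hf : DifferentiableOn ℂ f (ball z R)) (hC : ∀ w ∈ ball z R, ‖f w‖ ≤ C) :
    ‖fderiv ℂ f z‖ ≤ 2 * C / R := by
  refine Complex.norm_fderiv_le_div_of_mapsTo_ball hf (fun w hw => ?_) hR
  rw [mem_closedBall, dist_eq_norm, two_mul]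
  exact (norm_sub_le _ _).trans (add_le_add (hC w hw) (hC z (mem_ball_self hR)))

theorem exists_ball_subset_and_norm_fderiv_le (hU : IsOpen U) (hf : DifferentiableOn ℂ f U)
    (hz : z ∈ U) :
    ∃ R > 0, ∃ C, ball z R ⊆ U ∧ ∀ x ∈ ball z R, ‖fderiv ℂ f x‖ ≤ C := by
  have hbdd : ∀ᶠ x in 𝓝 z, x ∈ U ∧ ‖f x‖ < ‖f z‖ + 1 :=
    (hU.eventually_mem hz).and <|
      (hf.continuousOn.continuousAt (hU.mem_nhds hz)).norm.eventually_lt_const (lt_add_one _)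
  obtain ⟨R, hR, hball⟩ := eventually_nhds_iff_ball.1 hbdd
  refine ⟨R / 2, half_pos hR, 2 * (‖f z‖ + 1) / (R / 2),
    fun x hx => (hball x (ball_subset_ball (half_le_self hR.le) hx)).1, fun x hx => ?_⟩
  have hsub : ball x (R / 2) ⊆ ball z R := ball_subset_ball' (by linarith [mem_ball.1 hx])
  exact norm_fderiv_le_of_forall_mem_ball_norm_le (half_pos hR)
    (hf.mono fun w hw => (hball w (hsub hw)).1) fun w hw => (hball w (hsub hw)).2.le

-- Cauchy's estimate is applied to `w ↦ f (w + (x - y)) - f w`, which is `O(‖x - y‖)`.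
theorem exists_ball_subset_and_lipschitzOnWith_fderiv (hU : IsOpen U)
    (hf : DifferentiableOn ℂ f U) (hz : z ∈ U) :
    ∃ R > 0, ∃ C, ball z R ⊆ U ∧ LipschitzOnWith C (fderiv ℂ f) (ball z R) := by
  obtain ⟨R, hR, C, hRU, hC⟩ := exists_ball_subset_and_norm_fderiv_le hU hf hz
  have hdiff : ∀ w ∈ ball z R, DifferentiableAt ℂ f w := fun w hw =>
    hf.differentiableAt (hU.mem_nhds (hRU hw))
  have hsub : ∀ {w}, w ∈ ball z (R / 2) → ball w (R / 2) ⊆ ball z R := fun hw =>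
    ball_subset_ball' (by linarith [mem_ball.1 hw])
  refine ⟨R / 2, half_pos hR, _, (ball_subset_ball (half_le_self hR.le)).trans hRU,
    LipschitzOnWith.of_dist_le' (K := 2 * C / (R / 2)) fun x hx y hy => ?_⟩
  rw [dist_eq_norm, dist_eq_norm]
  have hshift : ∀ w ∈ ball y (R / 2), w + (x - y) ∈ ball z R := fun w hw =>
    hsub hx (by rwa [mem_ball, dist_eq_norm, add_sub_assoc, sub_sub_cancel_left,
      ← sub_eq_add_neg, ← dist_eq_norm])
  have hder : ∀ w ∈ ball y (R / 2), HasFDerivAt (fun w => f (w + (x - y)) - f w)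
      (fderiv ℂ f (w + (x - y)) - fderiv ℂ f w) w := fun w hw =>
    ((hasFDerivAt_comp_add_right _).2 (hdiff _ (hshift w hw)).hasFDerivAt).sub
      (hdiff w (hsub hy hw)).hasFDerivAt
  have hbound : ∀ w ∈ ball y (R / 2), ‖f (w + (x - y)) - f w‖ ≤ C * ‖x - y‖ := fun w hw => by
    simpa only [add_sub_cancel_left] using
      (convex_ball z R).norm_image_sub_le_of_norm_fderiv_le (𝕜 := ℂ) hdiff hC
        (hsub hy hw) (hshift w hw)
  have h := norm_fderiv_le_of_forall_mem_ball_norm_le (half_pos hR)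
    (fun w hw => (hder w hw).differentiableAt.differentiableWithinAt) hbound
  rw [(hder y (mem_ball_self (half_pos hR))).fderiv, add_sub_cancel] at h
  exact h.trans_eq (by ring)

theorem norm_image_sub_sub_fderiv_le_of_lipschitzOnWith_fderiv {s : Set E} {C : NNReal}
    (hs : Convex ℝ s) (hf : ∀ x ∈ s, DifferentiableAt ℂ f x)
    (hC : LipschitzOnWith C (fderiv ℂ f) s) {x y : E} (hx : x ∈ s) (hy : y ∈ s) :
    ‖f y - f x - fderiv ℂ f x (y - x)‖ ≤ C * ‖y - x‖ ^ 2 := by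
  have hseg : segment ℝ x y ⊆ s := hs.segment_subset hx hy
  have hder : ∀ w ∈ segment ℝ x y, ‖fderiv ℂ f w - fderiv ℂ f x‖ ≤ C * ‖y - x‖ := fun w hw =>
    (hC.norm_sub_le (hseg hw) hx).trans
      (mul_le_mul_of_nonneg_left (norm_sub_le_of_mem_segment hw) C.2)
  have h := (convex_segment x y).norm_image_sub_le_of_norm_fderiv_le' (𝕜 := ℂ)
    (fun w hw => hf w (hseg hw)) hder (left_mem_segment ℝ x y) (right_mem_segment ℝ x y)
  rwa [mul_assoc, ← sq] at h

theorem differentiableAt_of_tendstoUniformlyOn_ball [CompleteSpace F] {ι : Type*} {l : Filter ι}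
    [l.NeBot] {g : ι → E → F} {R : ℝ} (hR : 0 < R)
    (hg : ∀ᶠ i in l, DifferentiableOn ℂ (g i) (ball z R))
    (hlim : TendstoUniformlyOn g f l (ball z R)) : DifferentiableAt ℂ f z := by
  have hsub : ∀ {x}, x ∈ ball z (R / 2) → ball x (R / 2) ⊆ ball z R := fun hx =>
    ball_subset_ball' (by linarith [mem_ball.1 hx])
  have hdiff : ∀ {i}, DifferentiableOn ℂ (g i) (ball z R) → ∀ x ∈ ball z R,
      DifferentiableAt ℂ (g i) x := fun hi x hx => hi.differentiableAt (isOpen_ball.mem_nhds hx)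
  have hhalf : ball z (R / 2) ⊆ ball z R := ball_subset_ball (half_le_self hR.le)
  have hcauchy : UniformCauchySeqOn (fun i => fderiv ℂ (g i)) l (ball z (R / 2)) := by
    have hgcauchy := hlim.uniformCauchySeqOn
    rw [SeminormedAddGroup.uniformCauchySeqOn_iff_tendstoUniformlyOn_zero,
      Metric.tendstoUniformlyOn_iff] at hgcauchy ⊢
    intro ε hε
    filter_upwards [hgcauchy (ε * R / 8) (by positivity), hg.prod_mk hg]
      with ⟨i, j⟩ hij ⟨hi, hj⟩ x hx
    simp only [Pi.zero_apply, dist_zero_left, neg_add_eq_sub] at hij ⊢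
    rw [← fderiv_sub (hdiff hj x (hhalf hx)) (hdiff hi x (hhalf hx))]
    refine (norm_fderiv_le_of_forall_mem_ball_norm_le (half_pos hR)
      ((hj.sub hi).mono (hsub hx)) fun w hw => (hij w (hsub hx hw)).le).trans_lt ?_
    rw [div_lt_iff₀ (half_pos hR)]
    linarith [mul_pos hε hR]
  have hexists : ∀ x ∈ ball z (R / 2), ∃ T, Tendsto (fun i => fderiv ℂ (g i) x) l (𝓝 T) :=
    fun x hx => cauchy_map_iff_exists_tendsto.1 (hcauchy.cauchy_map hx)
  choose! g' hg' using hexists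
  have hball : ball z (R / 2) ∈ 𝓝 z := ball_mem_nhds z (half_pos hR)
  have hunif : TendstoUniformlyOnFilter (fun i => fderiv ℂ (g i)) g' l (𝓝 z) :=
    (hcauchy.tendstoUniformlyOn_of_tendsto hg').tendstoUniformlyOnFilter.mono_right
      (le_principal_iff.2 hball)
  refine (hasFDerivAt_of_tendstoUniformlyOnFilter (f := g) hunif ?_ ?_).differentiableAt
  · filter_upwards [hg.prod_mk hball] with ⟨i, x⟩ ⟨hi, hx⟩
    exact (hdiff hi x (hhalf hx)).hasFDerivAt
  · filter_upwards [hball] with x hx using hlim.tendsto_at (hhalf hx)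

-- `fderiv ℂ f · v` is the locally uniform limit of the difference quotients of `f` along `v`.
theorem differentiableOn_fderiv_apply [CompleteSpace F] (hU : IsOpen U)
    (hf : DifferentiableOn ℂ f U) (v : E) : DifferentiableOn ℂ (fun x => fderiv ℂ f x v) U := by
  intro z hz
  obtain ⟨R, hR, C, hRU, hC⟩ := exists_ball_subset_and_lipschitzOnWith_fderiv hU hf hz
  have hdiff : ∀ w ∈ ball z R, DifferentiableAt ℂ f w := fun w hw =>
    hf.differentiableAt (hU.mem_nhds (hRU hw))
  have hhalf : ball z (R / 2) ⊆ ball z R := ball_subset_ball (half_le_self hR.le)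
  have hsmall : ∀ᶠ t : ℂ in 𝓝[≠] 0, ∀ x ∈ ball z (R / 2), x + t • v ∈ ball z R := by
    have : ∀ᶠ t : ℂ in 𝓝[≠] 0, ‖t • v‖ < R / 2 := by
      have hlim : Tendsto (fun t : ℂ => ‖t • v‖) (𝓝 0) (𝓝 0) :=
        Continuous.tendsto' (by fun_prop) 0 0 (by simp)
      exact nhdsWithin_le_nhds (hlim.eventually_lt_const (half_pos hR))
    filter_upwards [this] with t ht x hx
    rw [mem_ball, dist_eq_norm, add_sub_right_comm]
    rw [mem_ball, dist_eq_norm] at hx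
    linarith [norm_add_le (x - z) (t • v)]
  refine DifferentiableAt.differentiableWithinAt <|
    differentiableAt_of_tendstoUniformlyOn_ball (l := 𝓝[≠] (0 : ℂ))
      (g := fun t x => t⁻¹ • (f (x + t • v) - f x)) (half_pos hR) ?_ ?_
  · filter_upwards [hsmall] with t ht x hx
    have hshift : DifferentiableAt ℂ (fun x => f (x + t • v)) x :=
      (differentiableAt_comp_add_right _).2 (hdiff _ (ht x hx))
    exact ((hshift.sub (hdiff x (hhalf hx))).const_smul _).differentiableWithinAt
  · rw [Metric.tendstoUniformlyOn_iff]
    intro ε hε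
    have hlim : Tendsto (fun t : ℂ => C * ‖v‖ ^ 2 * ‖t‖) (𝓝 0) (𝓝 0) :=
      Continuous.tendsto' (by fun_prop) 0 0 (by simp)
    filter_upwards [hsmall, nhdsWithin_le_nhds (hlim.eventually_lt_const hε), self_mem_nhdsWithin]
      with t ht hlt ht0 x hx
    have htaylor := norm_image_sub_sub_fderiv_le_of_lipschitzOnWith_fderiv (convex_ball z R)
      hdiff hC (hhalf hx) (ht x hx)
    rw [add_sub_cancel_left, map_smul, norm_smul] at htaylor
    have ht0' : 0 < ‖t‖ := norm_pos_iff.2 ht0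
    refine lt_of_le_of_lt ?_ hlt
    rw [dist_eq_norm, norm_sub_rev, ← mul_le_mul_iff_right₀ ht0', ← norm_smul, smul_sub,
      smul_inv_smul₀ ht0]
    exact htaylor.trans_eq (by ring)

-- Cauchy's estimate is applied to `w ↦ f (w + h) - f w - fderiv ℂ f w h`, which is `O(‖h‖ ^ 2)`.
theorem norm_fderiv_add_sub_sub_fderiv_le_of_lipschitzOnWith_fderiv {R : ℝ} {C : NNReal}
    (hR : 0 < R) (hf : ∀ x ∈ ball z R, DifferentiableAt ℂ f x)
    (hC : LipschitzOnWith C (fderiv ℂ f) (ball z R)) {h : E} (hh : h ∈ ball 0 (R / 2))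
    (hf' : ∀ x ∈ ball z R, DifferentiableAt ℂ (fun x => fderiv ℂ f x h) x) :
    ‖fderiv ℂ f (z + h) - fderiv ℂ f z - fderiv ℂ (fun x => fderiv ℂ f x h) z‖ ≤
      4 * C / R * ‖h‖ ^ 2 := by
  have hhalf : ball z (R / 2) ⊆ ball z R := ball_subset_ball (half_le_self hR.le)
  have hshift : ∀ w ∈ ball z (R / 2), w + h ∈ ball z R := fun w hw => by
    rw [mem_ball_zero_iff] at hh
    rw [mem_ball, dist_eq_norm] at hw ⊢
    rw [add_sub_right_comm]
    linarith [norm_add_le (w - z) h]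
  have hder : ∀ w ∈ ball z (R / 2), HasFDerivAt (fun w => f (w + h) - f w - fderiv ℂ f w h)
      (fderiv ℂ f (w + h) - fderiv ℂ f w - fderiv ℂ (fun x => fderiv ℂ f x h) w) w :=
    fun w hw => (((hasFDerivAt_comp_add_right _).2 (hf _ (hshift w hw)).hasFDerivAt).sub
      (hf w (hhalf hw)).hasFDerivAt).sub (hf' w (hhalf hw)).hasFDerivAt
  have htaylor : ∀ w ∈ ball z (R / 2), ‖f (w + h) - f w - fderiv ℂ f w h‖ ≤ C * ‖h‖ ^ 2 :=
    fun w hw => by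
      simpa only [add_sub_cancel_left] using
        norm_image_sub_sub_fderiv_le_of_lipschitzOnWith_fderiv (convex_ball z R) hf hC
          (hhalf hw) (hshift w hw)
  have hle := norm_fderiv_le_of_forall_mem_ball_norm_le (half_pos hR)
    (fun w hw => (hder w hw).differentiableAt.differentiableWithinAt) htaylor
  rw [(hder z (mem_ball_self (half_pos hR))).fderiv] at hle
  exact hle.trans_eq (by ring)

-- The derivative of `fderiv ℂ f` at `z` is `h ↦ fderiv ℂ (fun x => fderiv ℂ f x h) z`.
theorem differentiableOn_fderiv [CompleteSpace F] (hU : IsOpen U)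
    (hf : DifferentiableOn ℂ f U) : DifferentiableOn ℂ (fderiv ℂ f) U := by
  intro z hz
  obtain ⟨R, hR, C, hRU, hC⟩ := exists_ball_subset_and_lipschitzOnWith_fderiv hU hf hz
  have hdiff : ∀ w ∈ ball z R, DifferentiableAt ℂ f w := fun w hw =>
    hf.differentiableAt (hU.mem_nhds (hRU hw))
  have hdiff' : ∀ h, ∀ w ∈ ball z R, DifferentiableAt ℂ (fun x => fderiv ℂ f x h) w :=
    fun h w hw => (differentiableOn_fderiv_apply hU hf h).differentiableAt (hU.mem_nhds (hRU hw))
  have hzR : z ∈ ball z R := mem_ball_self hR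
  let B : E →ₗ[ℂ] E →L[ℂ] F :=
    { toFun := fun h => fderiv ℂ (fun x => fderiv ℂ f x h) z
      map_add' := fun h k => by
        simp only [map_add]
        exact fderiv_fun_add (hdiff' h z hzR) (hdiff' k z hzR)
      map_smul' := fun c h => by
        simp only [map_smul]
        exact fderiv_fun_const_smul (hdiff' h z hzR) c }
  have hB : ∀ h, ‖B h‖ ≤ C * ‖h‖ := fun h =>
    norm_fderiv_le_of_lip' ℂ (by positivity) <| by
      filter_upwards [ball_mem_nhds z hR] with x hx
      rw [← sub_apply, mul_right_comm]
      exact ContinuousLinearMap.le_of_opNorm_le _ (hC.norm_sub_le hx hzR) h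
  have hderiv : HasFDerivAt (fderiv ℂ f) (B.mkContinuous C hB) z := by
    rw [hasFDerivAt_iff_isLittleO_nhds_zero]
    refine (Asymptotics.IsBigO.of_bound (4 * C / R) ?_).trans_isLittleO
      (Asymptotics.isLittleO_norm_pow_id one_lt_two)
    filter_upwards [ball_mem_nhds 0 (half_pos hR)] with h hh
    rw [Real.norm_of_nonneg (by positivity)]
    exact norm_fderiv_add_sub_sub_fderiv_le_of_lipschitzOnWith_fderiv hR hdiff hC hh (hdiff' h)
  exact hderiv.differentiableAt.differentiableWithinAt

theorem contDiffOn_two_of_differentiableOn [CompleteSpace F] (hU : IsOpen U)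
    (hf : DifferentiableOn ℂ f U) : ContDiffOn ℂ 2 f U := by
  have hf' := differentiableOn_fderiv hU hf
  have hcont := (differentiableOn_fderiv hU hf').continuousOn
  rw [← one_add_one_eq_two, contDiffOn_succ_iff_fderiv_of_isOpen hU, ← zero_add (1 : WithTop ℕ∞),
    contDiffOn_succ_iff_fderiv_of_isOpen hU, contDiffOn_zero]
  exact ⟨hf, by simp, hf', by simp, hcont⟩

end Holomorphic

section ConstantRank

variable {E F G H : Type*} [NormedAddCommGroup E] [NormedSpace ℝ E]
  [NormedAddCommGroup F] [NormedSpace ℝ F] [NormedAddCommGroup G] [NormedSpace ℝ G]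
  [NormedAddCommGroup H] [NormedSpace ℝ H]

theorem eventually_differentiableAt_of_contDiffAt_one {b : E → F} {p : E}
    (hb : ContDiffAt ℝ 1 b p) : ∀ᶠ x in 𝓝 p, DifferentiableAt ℝ b x :=
  (hb.eventually (by simp)).mono fun _ hx => hx.differentiableAt one_ne_zero

theorem hasFDerivAt_comp_zero_of_eventuallyEq_const {g : E → F} {γ : G → E} {Y : E → H} {k : G}
    {c : F} (hg : DifferentiableAt ℝ g (γ k)) (hγ : DifferentiableAt ℝ γ k)
    (hgγ : g ∘ γ =ᶠ[𝓝 k] fun _ => c) (hY : DifferentiableAt ℝ Y (γ k))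
    (hker : ∀ u, fderiv ℝ g (γ k) u = 0 → fderiv ℝ Y (γ k) u = 0) :
    HasFDerivAt (Y ∘ γ) (0 : G →L[ℝ] H) k := by
  have hzero : (fderiv ℝ g (γ k)).comp (fderiv ℝ γ k) = 0 :=
    (hg.hasFDerivAt.comp k hγ.hasFDerivAt).unique
      ((hasFDerivAt_const c k).congr_of_eventuallyEq hgγ)
  exact (hY.hasFDerivAt.comp k hγ.hasFDerivAt).congr_fderiv <|
    ContinuousLinearMap.ext fun u => hker _ (DFunLike.congr_fun hzero u)

-- In the chart `φ.prodFun` the level sets of `φ.leftFun` are the slices `{c} ×ˢ univ`, and `Y` has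
-- zero derivative along the slice through `x`.
theorem eventually_eq_comp_implicitFunction_of_forall_fderiv_eq_zero [CompleteSpace E]
    [CompleteSpace F] [CompleteSpace G] (φ : ImplicitFunctionData ℝ E F G)
    (hl : ContDiffAt ℝ 1 φ.leftFun φ.pt) (hr : ContDiffAt ℝ 1 φ.rightFun φ.pt) {O : Set E}
    (hO : O ∈ 𝓝 φ.pt) (Y : E → H) :
    ∀ᶠ x in 𝓝 φ.pt, (∀ z ∈ O, φ.leftFun z = φ.leftFun x → DifferentiableAt ℝ Y z ∧
        ∀ u, fderiv ℝ φ.leftFun z u = 0 → fderiv ℝ Y z u = 0) →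
      Y x = Y (φ.implicitFunction (φ.leftFun x) (φ.rightFun φ.pt)) := by
  have hΨc := φ.contDiffAt_implicitFunction hl hr one_ne_zero
  have hΨpt : φ.implicitFunction.uncurry (φ.prodFun φ.pt) = φ.pt :=
    φ.implicitFunction_apply_image.self_of_nhds
  have hΨdiff := eventually_differentiableAt_of_contDiffAt_one hΨc
  have hldiff := eventually_differentiableAt_of_contDiffAt_one hl
  have hΨO : ∀ᶠ y in 𝓝 (φ.prodFun φ.pt), φ.implicitFunction.uncurry y ∈ O ∧
      DifferentiableAt ℝ φ.leftFun (φ.implicitFunction.uncurry y) :=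
    hΨc.continuousAt.eventually (by rw [hΨpt]; exact Filter.Eventually.and hO hldiff)
  obtain ⟨ε, hε, hball⟩ := Metric.eventually_nhds_iff_ball.1
    (φ.leftFun_implicitFunction.and (hΨdiff.and hΨO))
  have hmem : ∀ᶠ x in 𝓝 φ.pt, φ.prodFun x ∈ ball (φ.prodFun φ.pt) ε :=
    φ.hasStrictFDerivAt.continuousAt.eventually_mem (ball_mem_nhds _ hε)
  simp only [φ.prodFun_apply, ← ball_prod_same] at hball hmem
  filter_upwards [hmem, φ.implicitFunction_apply_image] with x ⟨hxl, hxr⟩ hx hY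
  have hderiv : ∀ k ∈ ball (φ.rightFun φ.pt) ε,
      HasFDerivAt (Y ∘ φ.implicitFunction (φ.leftFun x)) (0 : G →L[ℝ] H) k := by
    intro k hk
    obtain ⟨hleft, hΨ, hzO, hzdiff⟩ := hball (φ.leftFun x, k) ⟨hxl, hk⟩
    obtain ⟨hYdiff, hYker⟩ := hY _ hzO hleft
    refine hasFDerivAt_comp_zero_of_eventuallyEq_const (c := φ.leftFun x) hzdiff
      (hΨ.comp k (hasFDerivAt_prodMk_right (φ.leftFun x) k).differentiableAt) ?_ hYdiff hYker
    filter_upwards [isOpen_ball.mem_nhds hk] with k' hk' using (hball (_, k') ⟨hxl, hk'⟩).1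
  have hconst := isOpen_ball.is_const_of_fderiv_eq_zero (convex_ball _ _).isPreconnected
    (fun k hk => (hderiv k hk).differentiableAt.differentiableWithinAt)
    (fun k hk => (hderiv k hk).fderiv) hxr (mem_ball_self hε)
  exact (congrArg Y hx).symm.trans hconst

theorem exists_eventually_eq_comp_of_forall_fderiv_eq_zero [CompleteSpace E]
    [FiniteDimensional ℝ F] {b : E → F} {p : E} (hb : ContDiffAt ℝ 1 b p)
    (hsurj : Function.Surjective (fderiv ℝ b p)) {O : Set E} (hO : O ∈ 𝓝 p) (Y : E → H) :
    ∃ s : F → E, s (b p) = p ∧ DifferentiableAt ℝ s (b p) ∧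
      ∀ᶠ x in 𝓝 p, (∀ z ∈ O, b z = b x → DifferentiableAt ℝ Y z ∧
        ∀ u, fderiv ℝ b z u = 0 → fderiv ℝ Y z u = 0) → Y x = Y (s (b x)) := by
  have := FiniteDimensional.complete ℝ F
  let φ := (hb.hasStrictFDerivAt one_ne_zero).implicitFunctionDataOfComplemented _ _
    (LinearMap.range_eq_top.2 hsurj)
    (fderiv ℝ b p).ker_closedComplemented_of_finiteDimensional_range
  have hr : ContDiffAt ℝ 1 φ.rightFun φ.pt :=
    (ContinuousLinearMap.contDiff _).contDiffAt.comp p (contDiffAt_id.sub contDiffAt_const)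
  have hslice : ContDiffAt ℝ 1 (fun c => (c, φ.rightFun p)) (b p) :=
    contDiffAt_id.prodMk contDiffAt_const
  exact ⟨fun c => φ.implicitFunction c (φ.rightFun p),
    φ.implicitFunction_apply_image.self_of_nhds,
    ((φ.contDiffAt_implicitFunction hb hr one_ne_zero).comp (b p) hslice).differentiableAt
      one_ne_zero,
    eventually_eq_comp_implicitFunction_of_forall_fderiv_eq_zero φ hb hr hO Y⟩

theorem ker_comp_le_of_finrank_range_le {K V₁ V₂ V₃ : Type*} [Field K] [AddCommGroup V₁]
    [Module K V₁] [AddCommGroup V₂] [Module K V₂] [FiniteDimensional K V₂] [AddCommGroup V₃]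
    [Module K V₃] {f : V₁ →ₗ[K] V₂} {g : V₂ →ₗ[K] V₃}
    (h : Module.finrank K f.range ≤ Module.finrank K (g ∘ₗ f).range) :
    (g ∘ₗ f).ker ≤ f.ker := by
  have hadd := (g.domRestrict f.range).finrank_range_add_finrank_ker
  rw [LinearMap.range_domRestrict, ← LinearMap.range_comp] at hadd
  have hker : (g.domRestrict f.range).ker = ⊥ := Submodule.finrank_eq_zero.1 (by lia)
  intro u hu
  have hfu := LinearMap.ker_eq_bot'.1 hker ⟨f u, u, rfl⟩ hu
  exact congrArg Subtype.val hfu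

theorem eventually_finrank_range_fderiv_le [FiniteDimensional ℝ F] {b : E → F} {p : E}
    (hb : ContDiffAt ℝ 1 b p) : ∀ᶠ x in 𝓝 p,
      Module.finrank ℝ (fderiv ℝ b p).range ≤ Module.finrank ℝ (fderiv ℝ b x).range := by
  filter_upwards [(hb.continuousAt_fderiv one_ne_zero).eventually_mem <|
    (isOpen_setOfPred_nat_le_rank _).mem_nhds
      (Module.finrank_eq_rank ℝ (fderiv ℝ b p).range).le] with x hx
  exact Nat.cast_le.1 (hx.trans_eq (Module.finrank_eq_rank ℝ (fderiv ℝ b x).range).symm)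

theorem eventually_ker_comp_fderiv_le [FiniteDimensional ℝ F] [FiniteDimensional ℝ G] {a : E → G}
    {p : E} (ha : ContDiffAt ℝ 1 a p) {P : G →L[ℝ] F}
    (hrank : ∀ᶠ x in 𝓝 p, Module.finrank ℝ (fderiv ℝ a x).range ≤
      Module.finrank ℝ (fderiv ℝ (P ∘ a) p).range) :
    ∀ᶠ x in 𝓝 p, ∀ u, fderiv ℝ (P ∘ a) x u = 0 → fderiv ℝ a x u = 0 := by
  have hdiff := eventually_differentiableAt_of_contDiffAt_one ha
  have hge := eventually_finrank_range_fderiv_le (P.contDiff.contDiffAt.comp p ha)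
  filter_upwards [hdiff, hrank, hge] with x hx hle hge
  have hle' := hle.trans hge
  rw [fderiv_comp x P.differentiableAt hx, P.fderiv] at hle' ⊢
  exact fun u hu => ker_comp_le_of_finrank_range_le hle' hu

variable {a : E → G} {p : E}

theorem exists_surjective_fderiv_comp_and_eventually_ker_le [FiniteDimensional ℝ G]
    (ha : ContDiffAt ℝ 1 a p) (hrank : ∀ᶠ x in 𝓝 p, Module.finrank ℝ (fderiv ℝ a x).range ≤
      Module.finrank ℝ (fderiv ℝ a p).range) :
    ∃ P : G →L[ℝ] (fderiv ℝ a p).range, Function.Surjective (fderiv ℝ (P ∘ a) p) ∧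
      ∀ᶠ x in 𝓝 p, ∀ u, fderiv ℝ (P ∘ a) x u = 0 → fderiv ℝ a x u = 0 := by
  obtain ⟨P, hP⟩ := Submodule.ClosedComplemented.of_finiteDimensional (fderiv ℝ a p).range
  have hsurj : Function.Surjective (fderiv ℝ (P ∘ a) p) := by
    rw [fderiv_comp p P.differentiableAt (ha.differentiableAt one_ne_zero), P.fderiv]
    rintro ⟨_, u, rfl⟩
    exact ⟨u, hP ⟨_, u, rfl⟩⟩
  refine ⟨P, hsurj, eventually_ker_comp_fderiv_le ha ?_⟩
  rwa [LinearMap.range_eq_top.2 hsurj, finrank_top]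

theorem exists_eventuallyEq_comp_of_eventually_finrank_range_fderiv_le [CompleteSpace E]
    [FiniteDimensional ℝ G] (ha : ContDiffAt ℝ 1 a p)
    (hrank : ∀ᶠ x in 𝓝 p, Module.finrank ℝ (fderiv ℝ a x).range ≤
      Module.finrank ℝ (fderiv ℝ a p).range) :
    ∃ σ : G → E, σ (a p) = p ∧ DifferentiableAt ℝ σ (a p) ∧ a =ᶠ[𝓝 p] a ∘ σ ∘ a := by
  obtain ⟨P, hsurj, hker⟩ := exists_surjective_fderiv_comp_and_eventually_ker_le ha hrank
  have hdiff := eventually_differentiableAt_of_contDiffAt_one ha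
  obtain ⟨s, hsp, hs, heq⟩ := exists_eventually_eq_comp_of_forall_fderiv_eq_zero
    (P.contDiff.contDiffAt.comp p ha) hsurj (hdiff.and hker) a
  exact ⟨s ∘ P, hsp, hs.comp (a p) P.differentiableAt,
    heq.mono fun x hx => hx fun z hz _ => hz⟩

theorem eventually_range_fderiv_eq_of_apply_eq [CompleteSpace E] [FiniteDimensional ℝ G]
    (ha : ContDiffAt ℝ 1 a p) (hrank : ∀ᶠ x in 𝓝 p, Module.finrank ℝ (fderiv ℝ a x).range =
      Module.finrank ℝ (fderiv ℝ a p).range) :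
    ∀ᶠ x in 𝓝 p, a x = a p → (fderiv ℝ a x).range = (fderiv ℝ a p).range := by
  obtain ⟨σ, hσp, hσ, heq⟩ := exists_eventuallyEq_comp_of_eventually_finrank_range_fderiv_le ha
    (hrank.mono fun x hx => hx.le)
  have hdiff := eventually_differentiableAt_of_contDiffAt_one ha
  filter_upwards [heq.eventuallyEq_nhds, hdiff, hrank] with x heqx hx hrankx hax
  refine Submodule.eq_of_le_of_finrank_eq ?_ hrankx
  have ha' : HasFDerivAt a (fderiv ℝ a p) (σ (a x)) := by
    rw [hax, hσp]
    exact (ha.differentiableAt one_ne_zero).hasFDerivAt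
  have hσ' : HasFDerivAt σ (fderiv ℝ σ (a p)) (a x) := hax ▸ hσ.hasFDerivAt
  rw [((ha'.comp x (hσ'.comp x hx.hasFDerivAt)).congr_of_eventuallyEq heqx).fderiv]
  exact LinearMap.range_comp_le_range _ (fderiv ℝ a p).toLinearMap

theorem eventually_apply_eq_of_ker_fderiv_le [CompleteSpace E] [FiniteDimensional ℝ G]
    (ha : ContDiffAt ℝ 1 a p) (hrank : ∀ᶠ x in 𝓝 p, Module.finrank ℝ (fderiv ℝ a x).range ≤
      Module.finrank ℝ (fderiv ℝ a p).range) {Y : E → H}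
    (hY : ∀ᶠ z in 𝓝 p, a z = a p → DifferentiableAt ℝ Y z ∧
      ∀ u, fderiv ℝ a z u = 0 → fderiv ℝ Y z u = 0) :
    ∀ᶠ x in 𝓝 p, a x = a p → Y x = Y p := by
  obtain ⟨P, hsurj, hker⟩ := exists_surjective_fderiv_comp_and_eventually_ker_le ha hrank
  have hb : ContDiffAt ℝ 1 (P ∘ a) p := P.contDiff.contDiffAt.comp p ha
  have hdiff := eventually_differentiableAt_of_contDiffAt_one ha
  have hfib : ∀ᶠ z in 𝓝 p, P (a z) = P (a p) → a z = a p := by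
    obtain ⟨s, hsp, -, heq⟩ :=
      exists_eventually_eq_comp_of_forall_fderiv_eq_zero hb hsurj (hdiff.and hker) a
    filter_upwards [heq] with z hz hPz
    rw [hz fun z' hz' _ => hz', Function.comp_apply, hPz]
    exact congrArg a hsp
  obtain ⟨s, hsp, -, heq⟩ := exists_eventually_eq_comp_of_forall_fderiv_eq_zero hb hsurj
    (hker.and (hfib.and hY)) Y
  filter_upwards [heq] with x hx hax
  have hPx : (P ∘ a) x = (P ∘ a) p := congrArg P hax
  rw [hx fun z hz hzx => ?_, hPx, hsp]
  obtain ⟨hkerz, hfibz, hYz⟩ := hz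
  obtain ⟨hYdiff, hYker⟩ := hYz (hfibz (hzx.trans hPx))
  exact ⟨hYdiff, fun u hu => hYker u (hkerz u hu)⟩

theorem range_fderiv_eq_of_isPreconnected [CompleteSpace E] [FiniteDimensional ℝ G] {V S : Set E}
    {r : ℕ} (hV : IsOpen V) (ha : ContDiffOn ℝ 1 a V)
    (hrank : ∀ x ∈ V, Module.finrank ℝ (fderiv ℝ a x).range = r)
    (hS : IsPreconnected S) (hSV : S ⊆ V) (haS : ∀ x ∈ S, ∀ y ∈ S, a x = a y) {q : E}
    (hp : p ∈ S) (hq : q ∈ S) : (fderiv ℝ a p).range = (fderiv ℝ a q).range := by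
  refine hS.induction₂ (fun x y => (fderiv ℝ a x).range = (fderiv ℝ a y).range)
    (fun x hx => ?_) (fun _ _ _ _ _ _ => Eq.trans) (fun _ _ _ _ => Eq.symm) hp hq
  have hVx := hV.mem_nhds (hSV hx)
  have hrankx := eventually_of_mem hVx fun y hy => (hrank y hy).trans (hrank x (hSV hx)).symm
  filter_upwards [nhdsWithin_le_nhds
    (eventually_range_fderiv_eq_of_apply_eq (ha.contDiffAt hVx) hrankx), self_mem_nhdsWithin]
    with y hy hyS using (hy (haS y hyS x hx)).symm

end ConstantRank

section Pairing

variable {E ι : Type*} [NormedAddCommGroup E] [NormedSpace ℝ E] [CompleteSpace E] [Fintype ι]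
  {a X : E → ι → ℝ} {V S : Set E} {r : ℕ}

-- On a fibre of `a`, symmetry kills the derivative of `w ⬝ᵥ X`: if `w = da_z v` and `da_z u = 0`
-- then `w ⬝ᵥ dX_z u = da_z u ⬝ᵥ dX_z v = 0`.
theorem dotProduct_eq_of_isPreconnected_of_mem_range_fderiv (hV : IsOpen V)
    (ha : ContDiffOn ℝ 1 a V) (hX : DifferentiableOn ℝ X V)
    (hsymm : ∀ x ∈ V, ∀ u v, fderiv ℝ a x u ⬝ᵥ fderiv ℝ X x v = fderiv ℝ a x v ⬝ᵥ fderiv ℝ X x u)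
    (hrank : ∀ x ∈ V, Module.finrank ℝ (fderiv ℝ a x).range = r)
    (hS : IsPreconnected S) (hSV : S ⊆ V) (haS : ∀ x ∈ S, ∀ y ∈ S, a x = a y) {p q : E}
    (hp : p ∈ S) (hq : q ∈ S) {w : ι → ℝ} (hw : w ∈ (fderiv ℝ a p).range) :
    w ⬝ᵥ X q = w ⬝ᵥ X p := by
  let l : (ι → ℝ) →L[ℝ] ℝ := (dotProductBilin ℝ ℝ w).toContinuousLinearMap
  refine hS.induction₂ (fun x y => w ⬝ᵥ X x = w ⬝ᵥ X y)
    (fun x hx => ?_) (fun _ _ _ _ _ _ => Eq.trans) (fun _ _ _ _ => Eq.symm) hq hp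
  have hVx := hV.mem_nhds (hSV hx)
  have hrankx := eventually_of_mem hVx fun y hy => (hrank y hy).trans (hrank x (hSV hx)).symm
  have hwx : w ∈ (fderiv ℝ a x).range := by
    rwa [range_fderiv_eq_of_isPreconnected hV ha hrank hS hSV haS hx hp]
  have hYx : ∀ᶠ z in 𝓝 x, a z = a x → DifferentiableAt ℝ (l ∘ X) z ∧
      ∀ u, fderiv ℝ a z u = 0 → fderiv ℝ (l ∘ X) z u = 0 := by
    filter_upwards [hVx, eventually_range_fderiv_eq_of_apply_eq (ha.contDiffAt hVx) hrankx]
      with z hz hrange haz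
    have hXz := hX.differentiableAt (hV.mem_nhds hz)
    refine ⟨l.differentiableAt.comp z hXz, fun u hu => ?_⟩
    obtain ⟨v, rfl⟩ : w ∈ (fderiv ℝ a z).range := by rwa [hrange haz]
    rw [fderiv_comp z l.differentiableAt hXz, l.fderiv]
    exact (hsymm z hz v u).trans (by rw [hu, zero_dotProduct])
  filter_upwards [nhdsWithin_le_nhds (eventually_apply_eq_of_ker_fderiv_le (ha.contDiffAt hVx)
    (hrankx.mono fun y hy => hy.le) hYx), self_mem_nhdsWithin]
    with y hy hyS using (hy (haS y hyS x hx)).symm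

end Pairing

section Coefficients

variable {𝕜 D E F : Type*} [RCLike 𝕜] [NormedAddCommGroup D] [NormedSpace 𝕜 D]
  [FiniteDimensional 𝕜 D] [NormedAddCommGroup E] [NormedSpace 𝕜 E] [NormedAddCommGroup F]
  [NormedSpace 𝕜 F] {V : Set E} {k : WithTop ℕ∞}

theorem exists_comp_eq_id_of_injective {T : D →L[𝕜] F} (hT : Function.Injective T) :
    ∃ N : F →L[𝕜] D, N.comp T = ContinuousLinearMap.id 𝕜 D := by
  obtain ⟨P, hP⟩ := Submodule.ClosedComplemented.of_finiteDimensional T.range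
  let e := (LinearEquiv.ofInjective T.toLinearMap hT).toContinuousLinearEquiv
  refine ⟨(e.symm : T.range →L[𝕜] D).comp P, ContinuousLinearMap.ext fun y => ?_⟩
  exact (congrArg e.symm (hP ⟨T y, y, rfl⟩)).trans (e.symm_apply_apply y)

theorem contDiffWithinAt_of_clm_apply_eq {b₀ : E} {M : E → D →L[𝕜] F} {a : E → D}
    {g : E → F} (hb₀ : b₀ ∈ V) (hM : ContDiffWithinAt 𝕜 k M V b₀) (hinj : Function.Injective (M b₀))
    (hg : ContDiffWithinAt 𝕜 k g V b₀) (hMa : ∀ b ∈ V, M b (a b) = g b) :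
    ContDiffWithinAt 𝕜 k a V b₀ := by
  have := FiniteDimensional.complete 𝕜 D
  obtain ⟨N, hN⟩ := exists_comp_eq_id_of_injective hinj
  have hNM : ContDiffWithinAt 𝕜 k (fun b => N.comp (M b)) V b₀ :=
    contDiffWithinAt_const.clm_comp hM
  have hinv₀ : (N.comp (M b₀)).IsInvertible := ⟨.refl 𝕜 D, hN.symm⟩
  have hnhds : ∀ᶠ T in 𝓝 (N.comp (M b₀)), T.IsInvertible := by
    rw [hN]
    exact (ContinuousLinearEquiv.refl 𝕜 D).nhds
  refine ((hinv₀.contDiffAt_map_inverse.comp_contDiffWithinAt b₀ hNM).clm_apply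
    (N.contDiff.contDiffAt.comp_contDiffWithinAt b₀ hg)).congr_of_eventuallyEq_of_mem ?_ hb₀
  filter_upwards [hNM.continuousWithinAt.eventually hnhds, self_mem_nhdsWithin] with b hb hbV
  exact ((hb.inverse_apply_eq).2 (congrArg N (hMa b hbV).symm)).symm

theorem contDiffOn_coeff_of_eq_sum_smul {ι : Type*} [Fintype ι] {φ : ι → E → F} {g : E → F}
    {a : E → ι → 𝕜} (hφ : ∀ i, ContDiffOn 𝕜 k (φ i) V) (hg : ContDiffOn 𝕜 k g V)
    (hindep : ∀ b ∈ V, LinearIndependent 𝕜 fun i => φ i b)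
    (hsum : ∀ b ∈ V, g b = ∑ i, a b i • φ i b) : ContDiffOn 𝕜 k a V := by
  let M : E → (ι → 𝕜) →L[𝕜] F := fun b =>
    ∑ i, (ContinuousLinearMap.proj (R := 𝕜) (φ := fun _ : ι => 𝕜) i).smulRight (φ i b)
  have hMapply : ∀ b y, M b y = ∑ i, y i • φ i b := fun b y => by
    simp only [M, sum_apply, ContinuousLinearMap.smulRight_apply, ContinuousLinearMap.proj_apply]
  have hM : ContDiffOn 𝕜 k M V := ContDiffOn.sum fun i _ => contDiffOn_const.smulRight (hφ i)
  have hinj : ∀ b ∈ V, Function.Injective (M b) := fun b hb =>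
    (injective_iff_map_eq_zero _).2 fun y hy => funext fun i =>
      Fintype.linearIndependent_iff.1 (hindep b hb) y ((hMapply b y).symm.trans hy) i
  exact fun b hb => contDiffWithinAt_of_clm_apply_eq hb (hM b hb) (hinj b hb) (hg b hb)
    fun x hx => (hMapply x _).trans (hsum x hx).symm

end Coefficients

theorem hasFDerivAt_pi_re {E ι : Type*} [NormedAddCommGroup E] [NormedSpace ℂ E] [Finite ι]
    {fi : ι → E → ℂ} {b : E} (hfi : ∀ i, DifferentiableAt ℂ (fi i) b) :
    HasFDerivAt (fun x i => (fi i x).re) (ContinuousLinearMap.pi fun i =>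
      Complex.reCLM.comp ((fderiv ℂ (fi i) b).restrictScalars ℝ)) b :=
  hasFDerivAt_pi.2 fun i =>
    Complex.reCLM.hasFDerivAt.comp b ((hfi i).hasFDerivAt.restrictScalars ℝ)

theorem fderiv_coeff_dotProduct_fderiv_re_comm
    {E ι : Type*} [NormedAddCommGroup E] [NormedSpace ℂ E] [Fintype ι]
    {f : E → ℂ} {fi : ι → E → ℂ} {a : E → ι → ℝ} {b : E}
    (hf : ContDiffAt ℂ 2 f b) (hfi : ∀ i, ContDiffAt ℂ 2 (fi i) b)
    (ha : DifferentiableAt ℝ a b)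
    (hsum : ∀ᶠ x in 𝓝 b, fderiv ℂ f x = ∑ i, a x i • fderiv ℂ (fi i) x) (u v : E) :
    fderiv ℝ a b u ⬝ᵥ fderiv ℝ (fun x i => (fi i x).re) b v =
      fderiv ℝ a b v ⬝ᵥ fderiv ℝ (fun x i => (fi i x).re) b u := by
  have hdiff : ∀ {g : E → ℂ}, ContDiffAt ℂ 2 g b → HasFDerivAt (fderiv ℂ g)
      ((fderiv ℂ (fderiv ℂ g) b).restrictScalars ℝ) b := fun hg =>
    ((hg.fderiv_right one_add_one_eq_two.le).differentiableAt
      one_ne_zero).hasFDerivAt.restrictScalars ℝ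
  have hsymm : ∀ {g : E → ℂ}, ContDiffAt ℂ 2 g b →
      fderiv ℂ (fderiv ℂ g) b u v = fderiv ℂ (fderiv ℂ g) b v u := fun hg =>
    hg.isSymmSndFDerivAt (by simp) u v
  have hprod := HasFDerivAt.fun_sum (u := Finset.univ) fun i _ =>
    (hasFDerivAt_pi'.1 ha.hasFDerivAt i).fun_smul (hdiff (hfi i))
  have heq := (hdiff hf).unique (hprod.congr_of_eventuallyEq hsum)
  have happ : ∀ u v, fderiv ℂ (fderiv ℂ f) b u v =
      ∑ i, (a b i • fderiv ℂ (fderiv ℂ (fi i)) b u v + fderiv ℝ a b u i • fderiv ℂ (fi i) b v) := by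
    intro u v
    simpa using congrArg (fun l : E →L[ℝ] E →L[ℂ] ℂ => l u v) heq
  have h := (happ u v).symm.trans ((hsymm hf).trans (happ v u))
  simp only [Finset.sum_add_distrib, hsymm (hfi _)] at h
  rw [(hasFDerivAt_pi_re fun i => (hfi i).differentiableAt two_ne_zero).fderiv]
  simpa [dotProduct] using congrArg Complex.re (add_left_cancel h)

theorem exists_surjective_mulVecLin_of_finrank_eq {K ι : Type*} [Field K] [Fintype ι] {r : ℕ}
    {W : Submodule K (ι → K)} (hW : Module.finrank K W = r) :
    ∃ M : Matrix (Fin r) ι K, Function.Surjective M.mulVecLin ∧ ∀ j, M j ∈ W := by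
  let w := Module.finBasisOfFinrankEq K W hW
  have hrow : LinearIndependent K (Matrix.of fun j => (w j : ι → K)).row :=
    w.linearIndependent.map' W.subtype W.ker_subtype
  refine ⟨Matrix.of fun j => (w j : ι → K), ?_, fun j => (w j).2⟩
  rw [← LinearMap.range_eq_top]
  refine Submodule.eq_top_of_finrank_eq ?_
  rw [Module.finrank_fintype_fun_eq_card, ← hrow.rank_matrix, Matrix.rank]

theorem stmt_11_general {E ι : Type*} [NormedAddCommGroup E] [NormedSpace ℂ E] [CompleteSpace E]
    [Fintype ι] {r : ℕ} {V : Set E} (hV : IsOpen V) (f : E → ℂ) (fi : ι → E → ℂ)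
    (hf : DifferentiableOn ℂ f V) (hfi : ∀ i, DifferentiableOn ℂ (fi i) V)
    (hindep : ∀ b ∈ V, LinearIndependent ℝ fun i => fderiv ℂ (fi i) b) (a : E → ι → ℝ)
    (ha : ∀ b ∈ V, fderiv ℂ f b = ∑ i, (a b i : ℂ) • fderiv ℂ (fi i) b)
    (hrank : ∀ b ∈ V, Module.finrank ℝ (LinearMap.range (fderiv ℝ a b).toLinearMap) = r)
    (c : ι → ℝ) (p : E) (hp : p ∈ V) (hpc : a p = c) :
    ∃ L : (ι → ℝ) →ₗ[ℝ] (Fin r → ℝ), Function.Surjective L ∧ ∃ c' : Fin r → ℝ,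
      ∀ q ∈ connectedComponentIn {x | x ∈ V ∧ a x = c} p, L (fun i => (fi i q).re) = c' := by
  have hf₂ := contDiffOn_two_of_differentiableOn hV hf
  have hfi₂ := fun i => contDiffOn_two_of_differentiableOn hV (hfi i)
  have hderiv : ∀ {g : E → ℂ}, ContDiffOn ℂ 2 g V → ContDiffOn ℝ 1 (fderiv ℂ g) V :=
    fun hg => (hg.fderiv_of_isOpen hV one_add_one_eq_two.le).restrict_scalars ℝ
  have ha₁ : ContDiffOn ℝ 1 a V :=
    contDiffOn_coeff_of_eq_sum_smul (fun i => hderiv (hfi₂ i)) (hderiv hf₂) hindep ha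
  have hX : DifferentiableOn ℝ (fun x i => (fi i x).re) V := fun b hb => (hasFDerivAt_pi_re
    fun i => (hfi i).differentiableAt (hV.mem_nhds hb)).differentiableAt.differentiableWithinAt
  have hsymm := fun b (hb : b ∈ V) => have hVb := hV.mem_nhds hb
    fderiv_coeff_dotProduct_fderiv_re_comm (hf₂.contDiffAt hVb)
      (fun i => (hfi₂ i).contDiffAt hVb) ((ha₁.contDiffAt hVb).differentiableAt one_ne_zero)
      (eventually_of_mem hVb ha)
  obtain ⟨M, hM, hMrange⟩ := exists_surjective_mulVecLin_of_finrank_eq (hrank p hp)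
  have hS := connectedComponentIn_subset {x | x ∈ V ∧ a x = c} p
  refine ⟨M.mulVecLin, hM, M.mulVecLin fun i => (fi i p).re, fun q hq => funext fun j => ?_⟩
  exact dotProduct_eq_of_isPreconnected_of_mem_range_fderiv hV ha₁ hX hsymm hrank
    isPreconnected_connectedComponentIn (fun x hx => (hS hx).1)
    (fun x hx y hy => (hS hx).2.trans (hS hy).2.symm)
    (mem_connectedComponentIn ⟨hp, hpc⟩) hq (hMrange j)

/-- (Lemma `leaffine`.) With `f, f₁, …, f_{2n}` holomorphic on an open `V ⊆ ℂⁿ`, the `df_i(b)`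
linearly independent over `ℝ` at each point, `a : V → ℝ^{2n}` the unique real-valued map with
`df = Σᵢ aᵢ dfᵢ`, and `da` of constant rank `r` on `V`: the fibers of `a` are affine in the
real coordinates `xᵢ = Re fᵢ`. -/
theorem stmt_11 {n r : ℕ} {V : Set (Fin n → ℂ)} (hV : IsOpen V)
    (f : (Fin n → ℂ) → ℂ) (fi : Fin (2 * n) → (Fin n → ℂ) → ℂ)
    (hf : DifferentiableOn ℂ f V) (hfi : ∀ i, DifferentiableOn ℂ (fi i) V)
    (hindep : ∀ b ∈ V,
      LinearIndependent ℝ (fun i : Fin (2 * n) => (fderiv ℂ (fi i) b).restrictScalars ℝ))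
    (a : (Fin n → ℂ) → Fin (2 * n) → ℝ)
    (ha : ∀ b ∈ V, fderiv ℂ f b = ∑ i, ((a b i : ℂ) • fderiv ℂ (fi i) b))
    (hrank : ∀ b ∈ V, Module.finrank ℝ (LinearMap.range (fderiv ℝ a b).toLinearMap) = r) :
    ∀ c : Fin (2 * n) → ℝ, ∀ p ∈ V, a p = c →
      ∃ L : (Fin (2 * n) → ℝ) →ₗ[ℝ] (Fin r → ℝ), Function.Surjective L ∧
        ∃ c' : Fin r → ℝ,
          ∀ q ∈ connectedComponentIn {x | x ∈ V ∧ a x = c} p,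
            L (fun i => (fi i q).re) = c' := by
  intro c p hp hpc
  exact stmt_11_general hV f fi hf hfi (fun b hb => (hindep b hb).of_comp
    (ContinuousLinearMap.restrictScalarsₗ ℂ (Fin n → ℂ) ℂ ℝ ℝ)) a ha hrank c p hp hpc
end

section
/- Let U ⊆ ℂ^n be a convex open set and let f₁, …, f_n : U → ℂ be holomorphic functions satisfying the symmetry condition ∂fᵢ/∂zⱼ = ∂fⱼ/∂zᵢ on U for all i, j. Then there exists a holomorphic function g : U → ℂ such that ∂g/∂zᵢ = fᵢ on U for every i. -/
/-!
The functions `fᵢ` are the coefficients of the `1`-form `ω = ∑ fᵢ dzᵢ`. The symmetry condition says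
that the bilinear map `dω z` is symmetric on basis vectors, hence symmetric, so `ω` is closed. By
the real Poincaré lemma on a convex set, `ω` has a primitive `g`; since the derivative `ω z` of `g`
is complex linear, `g` is holomorphic, and `ω z` takes the value `fᵢ z` on the `i`-th basis vector.
-/

open Module

theorem bilinear_apply_comm_of_basis {R M P ι : Type*} [CommSemiring R] [AddCommMonoid M]
    [Module R M] [AddCommMonoid P] [Module R P] (b : Basis ι R M) {B : M →ₗ[R] M →ₗ[R] P}
    (h : ∀ i j, B (b i) (b j) = B (b j) (b i)) (x y : M) : B x y = B y x :=
  LinearMap.congr_fun₂ (LinearMap.ext_basis b b h : B = B.flip) x y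

section FormCoefficients

variable {𝕜 E F ι : Type*} [NontriviallyNormedField 𝕜] [NormedAddCommGroup E] [NormedSpace 𝕜 E]
  [NormedAddCommGroup F] [NormedSpace 𝕜 F]

theorem differentiableAt_clm_iff_forall_basis [CompleteSpace 𝕜] {D : Type*}
    [NormedAddCommGroup D] [NormedSpace 𝕜 D] [Finite ι] (b : Basis ι 𝕜 E)
    {ω : D → E →L[𝕜] F} {z : D} :
    DifferentiableAt 𝕜 ω z ↔ ∀ i, DifferentiableAt 𝕜 (fun w ↦ ω w (b i)) z := by
  have := Fintype.ofFinite ι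
  have : FiniteDimensional 𝕜 E := b.finiteDimensional_of_finite
  refine ⟨fun h i ↦ h.clm_apply (differentiableAt_const _), fun h ↦ ?_⟩
  have hω : ω = fun w ↦ ∑ i, ContinuousLinearMap.smulRightL 𝕜 E F
      (b.coord i).toContinuousLinearMap (ω w (b i)) := by
    ext w x
    conv_lhs => rw [← b.sum_repr x]
    simp [-Basis.sum_repr]
  rw [hω]
  fun_prop

theorem fderiv_clm_apply_comm_of_basis (b : Basis ι 𝕜 E) {ω : E → E →L[𝕜] F} {z : E}
    (hω : DifferentiableAt 𝕜 ω z)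
    (hsym : ∀ i j, fderiv 𝕜 (fun w ↦ ω w (b i)) z (b j) = fderiv 𝕜 (fun w ↦ ω w (b j)) z (b i))
    (x y : E) : fderiv 𝕜 ω z x y = fderiv 𝕜 ω z y x := by
  have fderiv_apply (u v : E) : fderiv 𝕜 (fun w ↦ ω w v) z u = fderiv 𝕜 ω z u v := by
    simp [fderiv_clm_apply hω (differentiableAt_const v)]
  exact bilinear_apply_comm_of_basis b (B := (fderiv 𝕜 ω z).toLinearMap₁₂)
    (fun i j ↦ by simpa [fderiv_apply] using hsym j i) x y

end FormCoefficients

section Primitive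

variable {𝕜 E F : Type*} [RCLike 𝕜] [NormedAddCommGroup E] [NormedSpace 𝕜 E] [NormedSpace ℝ E]
  [NormedAddCommGroup F] [NormedSpace 𝕜 F] [CompleteSpace F] {U : Set E}

theorem exists_forall_hasFDerivAt_of_fderiv_apply_comm {ω : E → E →L[𝕜] F}
    (hU : IsOpen U) (hconv : Convex ℝ U) (hω : DifferentiableOn 𝕜 ω U)
    (hsym : ∀ z ∈ U, ∀ x y, fderiv 𝕜 ω z x y = fderiv 𝕜 ω z y x) :
    ∃ g : E → F, ∀ z ∈ U, HasFDerivAt g (ω z) z := by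
  let : NormedSpace ℝ F := .restrictScalars ℝ 𝕜 F
  refine hconv.exists_forall_hasFDerivAt_of_fderiv_symmetric hU
    (hω.restrictScalars ℝ) fun z hz x y ↦ ?_
  rw [(hω.differentiableAt (hU.mem_nhds hz)).fderiv_restrictScalars ℝ]
  exact hsym z hz x y

theorem stmt_13_general {ι : Type*} [Finite ι] (b : Basis ι 𝕜 E) (hU : IsOpen U)
    (hconv : Convex ℝ U) (f : ι → E → F) (hf : ∀ i, DifferentiableOn 𝕜 (f i) U)
    (hsym : ∀ i j, ∀ z ∈ U, fderiv 𝕜 (f i) z (b j) = fderiv 𝕜 (f j) z (b i)) :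
    ∃ g : E → F, DifferentiableOn 𝕜 g U ∧ ∀ z ∈ U, ∀ i, fderiv 𝕜 g z (b i) = f i z := by
  let ω (z : E) : E →L[𝕜] F := b.constrL (f · z)
  have hcoeff (i : ι) : (fun z ↦ ω z (b i)) = f i := funext fun z ↦ b.constrL_basis (f · z) i
  have hω (z : E) (hz : z ∈ U) : DifferentiableAt 𝕜 ω z :=
    (differentiableAt_clm_iff_forall_basis b).2 fun i ↦ by
      simpa only [hcoeff] using (hf i).differentiableAt (hU.mem_nhds hz)
  have hclosed (z : E) (hz : z ∈ U) : ∀ x y, fderiv 𝕜 ω z x y = fderiv 𝕜 ω z y x :=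
    fderiv_clm_apply_comm_of_basis b (hω z hz) fun i j ↦ by
      simpa only [hcoeff] using hsym i j z hz
  obtain ⟨g, hg⟩ := exists_forall_hasFDerivAt_of_fderiv_apply_comm hU hconv
    (fun z hz ↦ (hω z hz).differentiableWithinAt) hclosed
  refine ⟨g, fun z hz ↦ (hg z hz).differentiableAt.differentiableWithinAt, fun z hz i ↦ ?_⟩
  rw [(hg z hz).fderiv]
  exact congrFun (hcoeff i) z

end Primitive

/-- (Local existence of the potential, cf. Donagi–Markman / Theorem `theodonagi`.) If
`f₁, …, f_n` are holomorphic functions on a convex open set `U ⊆ ℂⁿ` satisfying the symmetry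
`∂fᵢ/∂zⱼ = ∂fⱼ/∂zᵢ`, then there is a holomorphic function `g` on `U` with `∂g/∂zᵢ = fᵢ`. -/
theorem stmt_13 {n : ℕ} {U : Set (Fin n → ℂ)} (hU : IsOpen U) (hconv : Convex ℝ U)
    (f : Fin n → (Fin n → ℂ) → ℂ) (hf : ∀ i, DifferentiableOn ℂ (f i) U)
    (hsym : ∀ i j, ∀ z ∈ U,
      fderiv ℂ (f i) z (Pi.single j 1) = fderiv ℂ (f j) z (Pi.single i 1)) :
    ∃ g : (Fin n → ℂ) → ℂ, DifferentiableOn ℂ g U ∧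
      ∀ z ∈ U, ∀ i, fderiv ℂ g z (Pi.single i 1) = f i z := by
  simpa only [Pi.basisFun_apply] using stmt_13_general (Pi.basisFun ℂ (Fin n)) hU hconv f hf
    (by simpa only [Pi.basisFun_apply] using hsym)
end
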